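/- arXiv:1608.07855 — 8 statements merged into one kernel-verified Lean document; each statement's English description precedes it below -/
import Mathlib

section
/- Let G be a connected finite simple graph and let a₁, a₂, a₃, a₄ be four distinct vertices of G, and set A = {a₁, a₂, a₃, a₄}. Assume that whenever {i, j, k, ℓ} = {1, 2, 3, 4}, every path in G from a_i to a_j and every path in G from a_k to a_ℓ share at least one common vertex lying outside A. Then there exists a vertex v of G such that deleting v disconnects G and the four vertices a₁, a₂, a₃, a₄ lie in four pairwise distinct connected components of G − v. -/
open SimpleGraph

variable {V : Type*}

/-- The `λ`-value of a walk: the sum in `ℤ/2`, over the edges of the walk counted with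
multiplicity, of their labels. -/
def walkLambda (lam : Sym2 V → ZMod 2) {G : SimpleGraph V} {x y : V} (w : G.Walk x y) :
    ZMod 2 :=
  (w.edges.map lam).sum

/-- `b` can be reached from `a` by a walk in `G` all of whose vertices avoid `Zv`. -/
def ReachAvoiding (G : SimpleGraph V) (Zv : Set V) (a b : V) : Prop :=
  ∃ w : G.Walk a b, ∀ x ∈ w.support, x ∉ Zv

/-- `B` is a bridge of `G` with respect to a cycle with vertex set `Zv` and edge set `Ze`:
either a single edge not of the cycle together with its two endpoints, both on the cycle,
or a connected component of `G − Zv` together with all edges (and their endpoints on the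
cycle) joining it to `Zv`. -/
def IsBridgeOf (G : SimpleGraph V) (Zv : Set V) (Ze : Set (Sym2 V)) (B : G.Subgraph) :
    Prop :=
  (∃ u v, G.Adj u v ∧ s(u, v) ∉ Ze ∧ u ∈ Zv ∧ v ∈ Zv ∧
      B.verts = {u, v} ∧ ∀ a b, B.Adj a b ↔ s(a, b) = s(u, v)) ∨
  (∃ a, a ∉ Zv ∧
      B.verts = {b | ReachAvoiding G Zv a b} ∪
        {z | z ∈ Zv ∧ ∃ c, ReachAvoiding G Zv a c ∧ G.Adj c z} ∧
      ∀ x y, B.Adj x y ↔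
        G.Adj x y ∧ (ReachAvoiding G Zv a x ∨ ReachAvoiding G Zv a y))

/-- `w` is a proper walk lying in the subgraph `B`, with respect to a cycle with vertex
set `Zv` and edge set `Ze`: the walk lies in `B`, none of its vertices lies on the cycle
except possibly its endpoints, and none of its edges is an edge of the cycle. -/
def IsProperWalkIn {G : SimpleGraph V} (B : G.Subgraph) (Zv : Set V) (Ze : Set (Sym2 V))
    {x y : V} (w : G.Walk x y) : Prop :=
  (∀ u ∈ w.support, u ∈ B.verts) ∧ (∀ e ∈ w.edges, e ∈ B.edgeSet) ∧
    (∀ u ∈ w.support, u ∈ Zv → u = x ∨ u = y) ∧ (∀ e ∈ w.edges, e ∉ Ze)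

/-- The set of `λ`-values of proper walks in `B` from `x` to the reference vertex `w`. -/
def labelSet {G : SimpleGraph V} (B : G.Subgraph) (Zv : Set V) (Ze : Set (Sym2 V))
    (lam : Sym2 V → ZMod 2) (x w : V) : Set (ZMod 2) :=
  {t | ∃ ω : G.Walk x w, IsProperWalkIn B Zv Ze ω ∧ walkLambda lam ω = t}

/-- A graph is 2-connected: it has at least three vertices, it is connected, and it
remains connected after the deletion of any single vertex. -/
def TwoConnected (G : SimpleGraph V) : Prop :=
  3 ≤ Nat.card V ∧ G.Connected ∧ ∀ v : V, (G.induce {u | u ≠ v}).Connected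

lemma aux_firstHit {V : Type*} [DecidableEq V] {G : SimpleGraph V} (S : Set V) {u v : V}
    (w : G.Walk u v) (hv : v ∈ S) :
    ∃ z ∈ S, ∃ r : G.Walk u z, r.IsPath ∧ ∀ t ∈ r.support, t ∈ S → t = z := by
  suffices h : ∃ z ∈ S, ∃ r : G.Walk u z, ∀ t ∈ r.support, t ∈ S → t = z by
    obtain ⟨z, hz, r, hr⟩ := h
    exact ⟨z, hz, r.bypass, r.bypass_isPath, fun t ht => hr t (r.support_bypass_subset_support ht)⟩
  induction w with
  | nil => exact ⟨_, hv, Walk.nil, by simp⟩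
  | @cons u b c hadj p ih =>
    by_cases hu : u ∈ S
    · exact ⟨u, hu, Walk.nil, by simp⟩
    · obtain ⟨z, hz, r, hr⟩ := ih hv
      refine ⟨z, hz, Walk.cons hadj r, ?_⟩
      intro t ht htS
      rw [Walk.support_cons, List.mem_cons] at ht
      rcases ht with rfl | ht
      · exact absurd htS hu
      · exact hr t ht htS

lemma aux_disj {V : Type*} {G : SimpleGraph V} {u v w : V} (p : G.Walk u v) (q : G.Walk v w)
    (h : (p.append q).IsPath) (t : V) (hp : t ∈ p.support) (hq : t ∈ q.support) : t = v := by
  have h1 := h.support_nodup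
  rw [Walk.support_append, List.nodup_append] at h1
  rw [Walk.mem_support_iff] at hq
  rcases hq with hq | hq
  · exact hq
  · exact absurd rfl (h1.2.2 t hp t hq)

lemma aux_drop {V : Type*} [DecidableEq V] {G : SimpleGraph V} {x b y : V} (p : G.Walk x b)
    (hp : p.IsPath) (hy : y ∈ p.support) (hyx : y ≠ x) :
    ∃ r : G.Walk y b, (∀ t ∈ r.support, t ∈ p.support) ∧ x ∉ r.support := by
  refine ⟨p.dropUntil y hy, fun t ht => p.support_dropUntil_subset_support hy ht, fun hx => ?_⟩
  refine hyx (aux_disj (p.takeUntil y hy) (p.dropUntil y hy) ?_ x (by simp) hx).symm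
  rw [Walk.take_spec]; exact hp

lemma aux_fin : ∀ i j : Fin 4, i ≠ j → ∃ k l : Fin 4,
    ({i, j, k, l} : Finset (Fin 4)) = Finset.univ ∧ k ≠ i ∧ k ≠ j ∧ l ≠ i ∧ l ≠ j := by
  decide

/-- Walk version of the crossing hypothesis. -/
def AuxCross {V : Type*} (G : SimpleGraph V) (a : Fin 4 → V) : Prop :=
  ∀ i j k l : Fin 4, ({i, j, k, l} : Finset (Fin 4)) = Finset.univ →
      ∀ p : G.Walk (a i) (a j), ∀ q : G.Walk (a k) (a l),
        ∃ x, x ∈ p.support ∧ x ∈ q.support ∧ x ∉ Set.range a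

lemma aux_step {V : Type*} [DecidableEq V] {G : SimpleGraph V} {a : Fin 4 → V}
    (hx : AuxCross G a) (i j k l : Fin 4)
    (hu : ({l, i, j, k} : Finset (Fin 4)) = Finset.univ) {x y : V}
    (pi : G.Walk x (a i)) (pj : G.Walk x (a j)) (pk : G.Walk x (a k)) (hpi : pi.IsPath)
    (hij : ∀ t ∈ pi.support, t ∈ pj.support → t = x)
    (hik : ∀ t ∈ pi.support, t ∈ pk.support → t = x)
    (r : G.Walk (a l) y) 
    (hr : ∀ t ∈ r.support, t ∈ pi.support ∨ t ∈ pj.support ∨ t ∈ pk.support → t = y)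
    (hy : y ∈ pi.support) : y = x := by
  by_contra hyx
  obtain ⟨s, hs, hsx⟩ := aux_drop pi hpi hy hyx
  obtain ⟨t, h1, h2, -⟩ := hx l i j k hu (r.append s) (pj.reverse.append pk)
  simp only [Walk.mem_support_append_iff, Walk.support_reverse, List.mem_reverse] at h1 h2
  have key : t ∈ pi.support ∧ t ≠ x := by
    rcases h1 with h1 | h1
    · have := hr t h1 (Or.inr h2)
      subst this
      exact ⟨hy, hyx⟩
    · exact ⟨hs t h1, fun h => hsx (h ▸ h1)⟩
  rcases h2 with h2 | h2
  · exact key.2 (hij t key.1 h2)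
  · exact key.2 (hik t key.1 h2)

lemma aux_star {V : Type*} [DecidableEq V] {G : SimpleGraph V} (hconn : G.Connected)
    {a : Fin 4 → V} (hx : AuxCross G a) :
    ∃ x : V, ∃ w : ∀ i, G.Walk x (a i), (∀ i, (w i).IsPath) ∧
      ∀ i j, i ≠ j → ∀ t ∈ (w i).support, t ∈ (w j).support → t = x := by
  obtain ⟨P, hP⟩ := hconn.exists_isPath (a 0) (a 1)
  obtain ⟨R⟩ := hconn.preconnected (a 2) (a 1)
  obtain ⟨x, hxP, r, hr, hrP⟩ := aux_firstHit {t | t ∈ P.support} R (by simp)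
  have hxP : x ∈ P.support := hxP
  obtain ⟨p0, p1, h0, h1, h01, s0, s1⟩ : ∃ (p0 : G.Walk x (a 0)) (p1 : G.Walk x (a 1)),
      p0.IsPath ∧ p1.IsPath ∧ (∀ t ∈ p0.support, t ∈ p1.support → t = x) ∧
      (∀ t ∈ p0.support, t ∈ P.support) ∧ (∀ t ∈ p1.support, t ∈ P.support) := by
    refine ⟨(P.takeUntil x hxP).reverse, P.dropUntil x hxP, (hP.takeUntil hxP).reverse,
      hP.dropUntil hxP, ?_, ?_, ?_⟩
    · intro t ht ht'
      rw [Walk.support_reverse, List.mem_reverse] at ht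
      refine aux_disj _ _ ?_ t ht ht'
      rw [Walk.take_spec]; exact hP
    · intro t ht
      rw [Walk.support_reverse, List.mem_reverse] at ht
      exact P.support_takeUntil_subset_support hxP ht
    · intro t ht
      exact P.support_dropUntil_subset_support hxP ht
  obtain ⟨p2, h2, h02, h12⟩ : ∃ (p2 : G.Walk x (a 2)), p2.IsPath ∧
      (∀ t ∈ p0.support, t ∈ p2.support → t = x) ∧
      (∀ t ∈ p1.support, t ∈ p2.support → t = x) := by
    refine ⟨r.reverse, hr.reverse, ?_, ?_⟩
    · intro t ht ht'
      rw [Walk.support_reverse, List.mem_reverse] at ht'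
      exact hrP t ht' (s0 t ht)
    · intro t ht ht'
      rw [Walk.support_reverse, List.mem_reverse] at ht'
      exact hrP t ht' (s1 t ht)
  obtain ⟨Q⟩ := hconn.preconnected (a 3) (a 0)
  obtain ⟨y, hy, q, hq, hqT⟩ := aux_firstHit
    {t | t ∈ p0.support ∨ t ∈ p1.support ∨ t ∈ p2.support} Q (by simp)
  have hqT : ∀ t ∈ q.support, t ∈ p0.support ∨ t ∈ p1.support ∨ t ∈ p2.support → t = y := hqT
  have hyx : y = x := by
    rcases hy with hy | hy | hy
    · exact aux_step hx 0 1 2 3 (by decide) p0 p1 p2 h0 h01 h02 q hqT hy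
    · exact aux_step hx 1 0 2 3 (by decide) p1 p0 p2 h1 (fun t a b => h01 t b a) h12 q
        (fun t ht h => hqT t ht (by tauto)) hy
    · exact aux_step hx 2 0 1 3 (by decide) p2 p0 p1 h2 (fun t a b => h02 t b a)
        (fun t a b => h12 t b a) q (fun t ht h => hqT t ht (by tauto)) hy
  subst hyx
  obtain ⟨p3, h3, h3T⟩ : ∃ (p3 : G.Walk y (a 3)), p3.IsPath ∧
      ∀ t ∈ p3.support, t ∈ p0.support ∨ t ∈ p1.support ∨ t ∈ p2.support → t = y :=
    ⟨q.reverse, hq.reverse, by simpa using hqT⟩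
  refine ⟨y, fun i => match i with | 0 => p0 | 1 => p1 | 2 => p2 | 3 => p3, ?_, ?_⟩
  · intro i
    fin_cases i
    exacts [h0, h1, h2, h3]
  · intro i j hij t
    fin_cases i <;> fin_cases j <;> first | exact absurd rfl hij | skip
    · exact h01 t
    · exact h02 t
    · exact fun h h' => h3T t h' (Or.inl h)
    · exact fun h h' => h01 t h' h
    · exact h12 t
    · exact fun h h' => h3T t h' (Or.inr (Or.inl h))
    · exact fun h h' => h02 t h' h
    · exact fun h h' => h12 t h' h
    · exact fun h h' => h3T t h' (Or.inr (Or.inr h))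
    · exact fun h h' => h3T t h (Or.inl h')
    · exact fun h h' => h3T t h (Or.inr (Or.inl h'))
    · exact fun h h' => h3T t h (Or.inr (Or.inr h'))

lemma aux_sep {V : Type*} [DecidableEq V] {G : SimpleGraph V}
    {a : Fin 4 → V} (hx : AuxCross G a) {x : V} (w : ∀ i, G.Walk x (a i))
    (hw : ∀ i, (w i).IsPath)
    (hd : ∀ i j, i ≠ j → ∀ t ∈ (w i).support, t ∈ (w j).support → t = x) (n : ℕ) :
    ∀ (i j : Fin 4) (u v : V) (q : G.Walk u v), q.length ≤ n → i ≠ j → u ∈ (w i).support →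
      v ∈ (w j).support → x ∉ q.support → False := by
  induction n using Nat.strong_induction_on with
  | _ n ih =>
  intro i j u v q hn hij hu hv hxq
  have hux : u ≠ x := fun h => hxq (h ▸ q.start_mem_support)
  have hvx : v ≠ x := fun h => hxq (h ▸ q.end_mem_support)
  by_cases hz : ∃ z ∈ q.support, z ≠ u ∧ z ≠ v ∧ ∃ k, z ∈ (w k).support
  · obtain ⟨z, hzq, hzu, hzv, k, hk⟩ := hz
    have hlen : (q.takeUntil z hzq).length + (q.dropUntil z hzq).length = q.length := by
      rw [← Walk.length_append, Walk.take_spec]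
    have l1 : (q.takeUntil z hzq).length ≠ 0 := fun h => hzu (Walk.eq_of_length_eq_zero h).symm
    have l2 : (q.dropUntil z hzq).length ≠ 0 := fun h => hzv (Walk.eq_of_length_eq_zero h)
    by_cases hki : k = i
    · exact ih _ (by omega : (q.dropUntil z hzq).length < n) k j z v (q.dropUntil z hzq) le_rfl
        (hki ▸ hij) hk hv (fun h => hxq (q.support_dropUntil_subset_support hzq h))
    · exact ih _ (by omega : (q.takeUntil z hzq).length < n) i k u z (q.takeUntil z hzq) le_rfl
        (Ne.symm hki) hu hk (fun h => hxq (q.support_takeUntil_subset_support hzq h))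
  · obtain ⟨k, l, huniv, hki, hkj, hli, hlj⟩ := aux_fin i j hij
    obtain ⟨s, hs, hsx⟩ := aux_drop (w i) (hw i) hu hux
    obtain ⟨s', hs', hsx'⟩ := aux_drop (w j) (hw j) hv hvx
    obtain ⟨t, h1, h2, -⟩ := hx i j k l huniv (s.reverse.append (q.append s'))
      ((w k).reverse.append (w l))
    simp only [Walk.mem_support_append_iff, Walk.support_reverse, List.mem_reverse] at h1 h2
    have hkl : ∃ m, m ≠ i ∧ m ≠ j ∧ t ∈ (w m).support := by
      rcases h2 with h2 | h2
      exacts [⟨k, hki, hkj, h2⟩, ⟨l, hli, hlj, h2⟩]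
    obtain ⟨m, hmi, hmj, hm⟩ := hkl
    rcases h1 with h1 | h1 | h1
    · exact hsx (hd m i hmi t hm (hs t h1) ▸ h1)
    · by_cases htu : t = u
      · subst htu; exact hux (hd m i hmi t hm hu)
      · by_cases htv : t = v
        · subst htv; exact hvx (hd m j hmj t hm hv)
        · exact hz ⟨t, h1, htu, htv, m, hm⟩
    · exact hsx' (hd m j hmj t hm (hs' t h1) ▸ h1)

/-- If any `aᵢaⱼ`-path and any `aₖaₗ`-path (for `{i,j,k,ℓ} = {1,2,3,4}`)
share a vertex outside `A = {a₁,a₂,a₃,a₄}` in a connected graph `G`, then some vertex `v`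
cuts `G` so that the four vertices lie in four distinct components of `G − v`. -/
theorem statement0 [Fintype V] (G : SimpleGraph V) (hconn : G.Connected)
    (a : Fin 4 → V) (hinj : Function.Injective a)
    (hcross : ∀ i j k l : Fin 4, ({i, j, k, l} : Finset (Fin 4)) = Finset.univ →
      ∀ p : G.Walk (a i) (a j), p.IsPath → ∀ q : G.Walk (a k) (a l), q.IsPath →
        ∃ x, x ∈ p.support ∧ x ∈ q.support ∧ x ∉ Set.range a) :
    ∃ v : V, (∀ i, a i ≠ v) ∧ ¬ (G.induce {u | u ≠ v}).Connected ∧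
      ∀ (i j : Fin 4) (hi : a i ∈ {u | u ≠ v}) (hj : a j ∈ {u | u ≠ v}), i ≠ j →
        ¬ (G.induce {u | u ≠ v}).Reachable ⟨a i, hi⟩ ⟨a j, hj⟩ := by
  classical
  have hx : AuxCross G a := by
    intro i j k l h p q
    obtain ⟨x, h1, h2, h3⟩ := hcross i j k l h p.bypass p.bypass_isPath q.bypass q.bypass_isPath
    exact ⟨x, p.support_bypass_subset_support h1, q.support_bypass_subset_support h2, h3⟩
  obtain ⟨x, w, hw, hd⟩ := aux_star hconn hx
  have hxa : x ∉ Set.range a := by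
    obtain ⟨t, h1, h2, h3⟩ := hx 0 1 2 3 (by decide) ((w 0).reverse.append (w 1))
      ((w 2).reverse.append (w 3))
    simp only [Walk.mem_support_append_iff, Walk.support_reverse, List.mem_reverse] at h1 h2
    have : t = x := by
      rcases h1 with h1 | h1 <;> rcases h2 with h2 | h2
      · exact hd 0 2 (by decide) t h1 h2
      · exact hd 0 3 (by decide) t h1 h2
      · exact hd 1 2 (by decide) t h1 h2
      · exact hd 1 3 (by decide) t h1 h2
    exact this ▸ h3
  have hax : ∀ i, a i ≠ x := fun i h => hxa ⟨i, h⟩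
  have hsep : ∀ (i j : Fin 4) (hi : a i ∈ {u | u ≠ x}) (hj : a j ∈ {u | u ≠ x}), i ≠ j →
        ¬ (G.induce {u | u ≠ x}).Reachable ⟨a i, hi⟩ ⟨a j, hj⟩ := by
    rintro i j hi hj hij ⟨p⟩
    let f : G.induce {u | u ≠ x} →g G := (Embedding.induce {u | u ≠ x}).toHom
    refine aux_sep hx w hw hd _ i j (a i) (a j) (p.map f) le_rfl hij (by simp) (by simp) ?_
    intro h
    have h' : x ∈ p.support.map f := (Walk.support_map f p) ▸ h
    obtain ⟨z, -, hz⟩ := List.mem_map.1 h'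
    exact z.2 hz
  exact ⟨x, hax, fun h => hsep 0 1 (hax 0) (hax 1) (by decide) (h.preconnected _ _), hsep⟩
end

section
/- Let G be a 2-connected finite simple graph and let λ : E(G) → ℤ/2 be an edge labeling. If every cycle Z of G satisfies λ(Z) = 1 (i.e., every cycle of G is nontrivial), then G is itself a cycle: G is connected and every vertex of G has degree exactly 2. -/
open SimpleGraph

variable {V : Type*}

theorem aux_walk {G : SimpleGraph V} {v : V} (h : (G.induce {u | u ≠ v}).Connected) {a b : V}
    (ha : a ≠ v) (hb : b ≠ v) : ∃ w : G.Walk a b, v ∉ w.support := by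
  obtain ⟨w⟩ := h.preconnected ⟨a, ha⟩ ⟨b, hb⟩
  refine ⟨w.map (Embedding.induce {u | u ≠ v}).toHom, ?_⟩
  intro hv
  have hv := List.mem_map.1 ((Walk.support_map (Embedding.induce {u | u ≠ v}).toHom w) ▸ hv)
  obtain ⟨x, -, hx⟩ := hv
  exact x.2 hx

theorem aux_first {G : SimpleGraph V} (S : Set V) {c a : V} (w : G.Walk c a) (ha : a ∈ S) :
    ∃ x ∈ S, ∃ Q : G.Walk c x, (∀ y ∈ Q.support, y ∈ S → y = x) ∧ Q.support ⊆ w.support := by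
  induction w with
  | nil => exact ⟨_, ha, Walk.nil, by simp, by simp⟩
  | @cons u _ _ h p ih =>
    by_cases hu : u ∈ S
    · exact ⟨u, hu, Walk.nil, by simp, by simp⟩
    · obtain ⟨x, hx, Q, h1, h2⟩ := ih ha
      refine ⟨x, hx, Walk.cons h Q, ?_, ?_⟩
      · intro y hy hyS
        rw [Walk.support_cons, List.mem_cons] at hy
        rcases hy with rfl | hy
        · exact absurd hyS hu
        · exact h1 y hy hyS
      · rw [Walk.support_cons, Walk.support_cons]
        exact List.cons_subset_cons _ h2

theorem aux_append {G : SimpleGraph V} {a b c : V} {p : G.Walk a b} {q : G.Walk b c}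
    (hp : p.IsPath) (hq : q.IsPath) (h : ∀ y ∈ p.support, y ∈ q.support → y = b) :
    (p.append q).IsPath := by
  rw [Walk.isPath_def, Walk.support_append, List.nodup_append]
  have hq' := hq.support_nodup
  rw [← Walk.cons_tail_support, List.nodup_cons] at hq'
  refine ⟨hp.support_nodup, hq'.2, ?_⟩
  rintro y hy z hz rfl
  have := h y hy (List.mem_of_mem_tail hz)
  subst this
  exact hq'.1 hz

theorem aux_cycle {G : SimpleGraph V} (lam : Sym2 V → ZMod 2)
    (hcyc : ∀ (z : V) (Z : G.Walk z z), Z.IsCycle → walkLambda lam Z = 1)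
    {v a b : V} (p : G.Walk a b) (hp : p.IsPath) (hv : v ∉ p.support) (hab : a ≠ b)
    (ha : G.Adj v a) (hb : G.Adj v b) :
    lam s(v, a) + walkLambda lam p + lam s(v, b) = 1 := by
  have hc : (Walk.cons ha (p.concat hb.symm)).IsCycle := by
    rw [Walk.cons_isCycle_iff]
    refine ⟨hp.concat hv hb.symm, ?_⟩
    rw [Walk.edges_concat, List.concat_eq_append, List.mem_append, List.mem_singleton]
    rintro (h | h)
    · exact hv (Walk.fst_mem_support_of_mem_edges _ h)
    · rw [Sym2.eq_swap, Sym2.eq_iff] at h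
      rcases h with h | h
      · exact hab h.1
      · exact hb.ne h.2
  have := hcyc v _ hc
  simp only [walkLambda, Walk.edges_cons, Walk.edges_concat, List.concat_eq_append,
    List.map_cons, List.map_append, List.sum_cons, List.sum_append, List.map_nil,
    List.sum_nil, add_zero] at this
  rw [Sym2.eq_swap (a := b)] at this
  rw [← this, walkLambda, add_assoc]

theorem aux_deg3 {G : SimpleGraph V} (lam : Sym2 V → ZMod 2)
    (hcyc : ∀ (z : V) (Z : G.Walk z z), Z.IsCycle → walkLambda lam Z = 1)
    {v a b c : V} (h : (G.induce {u | u ≠ v}).Connected)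
    (ha : G.Adj v a) (hb : G.Adj v b) (hc : G.Adj v c)
    (hab : a ≠ b) (hac : a ≠ c) (hbc : b ≠ c) : False := by
  classical
  obtain ⟨p0, hp0⟩ := aux_walk h ha.ne' hb.ne'
  obtain ⟨q0, hq0⟩ := aux_walk h hc.ne' ha.ne'
  obtain ⟨p, hp, hvp⟩ : ∃ p : G.Walk a b, p.IsPath ∧ v ∉ p.support :=
    ⟨p0.bypass, p0.bypass_isPath, fun h => hp0 (p0.support_bypass_subset h)⟩
  obtain ⟨x, hx, Q0, h1, h2⟩ := aux_first {y | y ∈ p.support} q0 p.start_mem_support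
  obtain ⟨Q, hQ, hvQ, h1⟩ : ∃ Q : G.Walk c x, Q.IsPath ∧ v ∉ Q.support ∧
      ∀ y ∈ Q.support, y ∈ p.support → y = x :=
    ⟨Q0.bypass, Q0.bypass_isPath, fun h => hq0 (h2 (Q0.support_bypass_subset h)),
      fun y hy => h1 y (Q0.support_bypass_subset hy)⟩
  have hx : x ∈ p.support := hx
  have hT : (p.takeUntil x hx).support ⊆ p.support := p.support_takeUntil_subset hx
  have hD : (p.dropUntil x hx).support ⊆ p.support := p.support_dropUntil_subset hx
  have e1 := aux_cycle lam hcyc p hp hvp hab ha hb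
  have e2 := aux_cycle lam hcyc (Q.append (p.takeUntil x hx).reverse)
    (aux_append hQ (hp.takeUntil hx).reverse
      (fun y hy hy' => h1 y hy (hT (by simpa using hy'))))
    (by
      rw [Walk.mem_support_append_iff, Walk.support_reverse, List.mem_reverse]
      rintro (h | h)
      exacts [hvQ h, hvp (hT h)]) hac.symm hc ha
  have e3 := aux_cycle lam hcyc (Q.append (p.dropUntil x hx))
    (aux_append hQ (hp.dropUntil hx) (fun y hy hy' => h1 y hy (hD hy')))
    (by
      rw [Walk.mem_support_append_iff]
      rintro (h | h)
      exacts [hvQ h, hvp (hD h)]) hbc.symm hc hb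
  rw [← p.take_spec hx] at e1
  simp only [walkLambda, Walk.edges_append, Walk.edges_reverse, List.map_append,
    List.map_reverse, List.sum_reverse, List.sum_append] at e1 e2 e3
  generalize (List.map lam (p.takeUntil x hx).edges).sum = T at *
  generalize (List.map lam (p.dropUntil x hx).edges).sum = D at *
  generalize (List.map lam Q.edges).sum = q at *
  generalize lam s(v, a) = A at *
  generalize lam s(v, b) = B at *
  generalize lam s(v, c) = C at *
  clear * - e1 e2 e3
  have h2 : (2 : ZMod 2) = 0 := rfl
  have : (1 : ZMod 2) = 0 := by
    linear_combination (A + B + C + T + D + q - 1) * h2 - e1 - e2 - e3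
  exact one_ne_zero this

/-- If `G` is 2-connected and every cycle of `G` has `λ`-value `1`
(every cycle is nontrivial), then `G` is itself a cycle: it is connected and every
vertex has degree exactly `2`. -/
theorem statement2 [Fintype V] (G : SimpleGraph V) [DecidableRel G.Adj]
    (lam : Sym2 V → ZMod 2) (h2 : TwoConnected G)
    (hcyc : ∀ (z : V) (Z : G.Walk z z), Z.IsCycle → walkLambda lam Z = 1) :
    G.Connected ∧ ∀ v : V, G.degree v = 2 := by
  classical
  refine ⟨h2.2.1, fun v => le_antisymm ?_ ?_⟩
  · by_contra hlt
    have h3 : 2 < (G.neighborFinset v).card := by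
      rw [card_neighborFinset_eq_degree]; omega
    obtain ⟨a, b, c, ha, hb, hc, hab, hac, hbc⟩ := Finset.two_lt_card_iff.1 h3
    rw [mem_neighborFinset] at ha hb hc
    exact aux_deg3 lam hcyc (h2.2.2 v) ha hb hc hab hac hbc
  · by_contra hlt
    have hle : (G.neighborFinset v).card ≤ 1 := by
      rw [card_neighborFinset_eq_degree]; omega
    have h3 := h2.1
    rw [Nat.card_eq_fintype_card] at h3
    -- all neighbours of `v` equal some `u ≠ v`
    obtain ⟨u, huv, hu⟩ : ∃ u, u ≠ v ∧ ∀ y, G.Adj v y → y = u := by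
      by_cases hn : ∃ u, G.Adj v u
      · obtain ⟨u, hu⟩ := hn
        refine ⟨u, hu.ne', fun y hy => ?_⟩
        exact Finset.card_le_one.1 hle y (by simpa using hy) u (by simpa using hu)
      · obtain ⟨u, hu⟩ := Fintype.exists_ne_of_one_lt_card (by omega) v
        exact ⟨u, hu, fun y hy => absurd ⟨y, hy⟩ hn⟩
    obtain ⟨w, hw⟩ : ∃ w, w ∉ ({u, v} : Finset V) := by
      by_contra hcon
      push Not at hcon
      have h4 : (Finset.univ : Finset V).card ≤ ({u, v} : Finset V).card :=
        Finset.card_le_card (fun x _ => hcon x)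
      have h5 := Finset.card_le_two (a := u) (b := v)
      rw [Finset.card_univ] at h4
      omega
    simp only [Finset.mem_insert, Finset.mem_singleton, not_or] at hw
    obtain ⟨p, hp⟩ := aux_walk (h2.2.2 u) huv.symm hw.1
    cases p with
    | nil => exact hw.2 rfl
    | cons h q =>
      apply hp
      rw [Walk.support_cons, ← hu _ h]
      exact List.mem_cons_of_mem _ q.start_mem_support
end

section
/- Let G be a finite simple graph, Z a cycle in G, λ : E(G) → ℤ/2 an edge labeling, and B a bridge of G with respect to Z containing at least one vertex v ∉ V(Z). Let x, y ∈ V(B) and let ω be a proper walk in B from x to y. Then there exists a proper walk ω′ in B from x to y that passes through the vertex v and satisfies λ(ω′) = λ(ω). -/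
open SimpleGraph

variable {V : Type*}

theorem ReachAvoiding.trans' {G : SimpleGraph V} {Zv : Set V} {a b c : V}
    (h₁ : ReachAvoiding G Zv a b) (h₂ : ReachAvoiding G Zv b c) : ReachAvoiding G Zv a c := by
  obtain ⟨p, hp⟩ := h₁
  obtain ⟨q, hq⟩ := h₂
  refine ⟨p.append q, fun x hx => ?_⟩
  rcases (Walk.mem_support_append_iff _ _).1 hx with h | h
  · exact hp x h
  · exact hq x h

theorem ReachAvoiding.symm' {G : SimpleGraph V} {Zv : Set V} {a b : V}
    (h₁ : ReachAvoiding G Zv a b) : ReachAvoiding G Zv b a := by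
  obtain ⟨p, hp⟩ := h₁
  exact ⟨p.reverse, fun x hx => hp x (by simpa using hx)⟩

theorem reach_of_mem {G : SimpleGraph V} {Zv : Set V} {b c : V} (p : G.Walk b c)
    (hp : ∀ x ∈ p.support, x ∉ Zv) {u : V} (hu : u ∈ p.support) : ReachAvoiding G Zv b u := by
  classical
  exact ⟨p.takeUntil u hu, fun x hx => hp x (p.support_takeUntil_subset_support hu hx)⟩

theorem reach_not_mem {G : SimpleGraph V} {Zv : Set V} {b c : V}
    (h : ReachAvoiding G Zv b c) : c ∉ Zv := by
  obtain ⟨p, hp⟩ := h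
  exact hp c p.end_mem_support

theorem walk_to {G : SimpleGraph V} {Zv : Set V} {a v x : V}
    (hv : ReachAvoiding G Zv a v)
    (hx : ReachAvoiding G Zv a x ∨ (x ∈ Zv ∧ ∃ c, ReachAvoiding G Zv a c ∧ G.Adj c x)) :
    ∃ p : G.Walk x v, (∀ u ∈ p.support, u = x ∨ ReachAvoiding G Zv a u) ∧
      ∀ e ∈ p.edges, ∃ c d, e = s(c, d) ∧ G.Adj c d ∧ ReachAvoiding G Zv a c := by
  have key : ∀ c, ReachAvoiding G Zv a c → ∃ p : G.Walk c v,
      (∀ u ∈ p.support, ReachAvoiding G Zv a u) ∧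
      ∀ e ∈ p.edges, ∃ c d, e = s(c, d) ∧ G.Adj c d ∧ ReachAvoiding G Zv a c := by
    intro c hc
    obtain ⟨p, hp⟩ := hc.symm'.trans' hv
    have h1 : ∀ u ∈ p.support, ReachAvoiding G Zv a u :=
      fun u hu => hc.trans' (reach_of_mem p hp hu)
    refine ⟨p, h1, fun e he => ?_⟩
    induction e with
    | _ c d => exact ⟨c, d, rfl, p.adj_of_mem_edges he, h1 c (p.fst_mem_support_of_mem_edges he)⟩
  rcases hx with hx | ⟨-, c, hc, hcx⟩
  · obtain ⟨p, h1, h2⟩ := key x hx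
    exact ⟨p, fun u hu => Or.inr (h1 u hu), h2⟩
  · obtain ⟨p, h1, h2⟩ := key c hc
    refine ⟨Walk.cons hcx.symm p, fun u hu => ?_, fun e he => ?_⟩
    · rw [Walk.support_cons, List.mem_cons] at hu
      exact hu.imp id (h1 u)
    · rw [Walk.edges_cons, List.mem_cons] at he
      rcases he with rfl | he
      · exact ⟨c, x, Sym2.eq_swap, hcx, hc⟩
      · exact h2 e he

/-- In a bridge `B` (w.r.t. a cycle `Z`) containing a vertex `v ∉ V(Z)`,
every proper walk `ω` in `B` from `x` to `y` can be replaced by a proper walk `ω′` in `B`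
from `x` to `y` that passes through `v` and has the same `λ`-value. -/
theorem statement3 [Fintype V] (G : SimpleGraph V) (lam : Sym2 V → ZMod 2)
    (z₀ : V) (Z : G.Walk z₀ z₀) (hZ : Z.IsCycle) (B : G.Subgraph)
    (hB : IsBridgeOf G {u | u ∈ Z.support} {e | e ∈ Z.edges} B)
    (v : V) (hvB : v ∈ B.verts) (hvZ : v ∉ Z.support)
    (x y : V) (hx : x ∈ B.verts) (hy : y ∈ B.verts)
    (w : G.Walk x y) (hw : IsProperWalkIn B {u | u ∈ Z.support} {e | e ∈ Z.edges} w) :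
    ∃ w' : G.Walk x y, IsProperWalkIn B {u | u ∈ Z.support} {e | e ∈ Z.edges} w' ∧
      v ∈ w'.support ∧ walkLambda lam w' = walkLambda lam w := by
  rcases hB with ⟨a, b, -, -, ha, hb, hV, -⟩ | ⟨a, ha, hV, hE⟩
  · rw [hV] at hvB
    rcases hvB with rfl | rfl
    · exact absurd ha hvZ
    · exact absurd hb hvZ
  have hva : ReachAvoiding G {u | u ∈ Z.support} a v := by
    rw [hV] at hvB
    rcases hvB with h | h
    · exact h
    · exact absurd h.1 hvZ
  have hx' := hx
  rw [hV] at hx'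
  obtain ⟨p, hp1, hp2⟩ := walk_to hva hx'
  obtain ⟨hw1, hw2, hw3, hw4⟩ := hw
  have hpB : ∀ u ∈ p.support, u ∈ B.verts := by
    intro u hu
    rcases hp1 u hu with rfl | h
    · exact hx
    · rw [hV]; exact Or.inl h
  have hpZ : ∀ u ∈ p.support, u ∈ {u | u ∈ Z.support} → u = x ∨ u = y := by
    intro u hu hz
    rcases hp1 u hu with h | h
    · exact Or.inl h
    · exact absurd hz (reach_not_mem h)
  have hpE : ∀ e ∈ p.edges, e ∈ B.edgeSet := by
    intro e he
    obtain ⟨c, d, rfl, hcd, hc⟩ := hp2 e he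
    rw [Subgraph.mem_edgeSet]
    exact (hE c d).2 ⟨hcd, Or.inl hc⟩
  have hpZe : ∀ e ∈ p.edges, e ∉ {e | e ∈ Z.edges} := by
    intro e he hz
    obtain ⟨c, d, rfl, hcd, hc⟩ := hp2 e he
    exact reach_not_mem hc (Z.fst_mem_support_of_mem_edges hz)
  have hs : ∀ u ∈ (p.append (p.reverse.append w)).support, u ∈ p.support ∨ u ∈ w.support := by
    intro u hu
    simp only [Walk.mem_support_append_iff, Walk.support_reverse, List.mem_reverse] at hu
    tauto
  have he : ∀ e ∈ (p.append (p.reverse.append w)).edges, e ∈ p.edges ∨ e ∈ w.edges := by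
    intro u hu
    simp only [Walk.edges_append, Walk.edges_reverse, List.mem_append, List.mem_reverse] at hu
    tauto
  refine ⟨p.append (p.reverse.append w), ⟨?_, ?_, ?_, ?_⟩, ?_, ?_⟩
  · exact fun u hu => (hs u hu).elim (hpB u) (hw1 u)
  · exact fun u hu => (he u hu).elim (hpE u) (hw2 u)
  · exact fun u hu => (hs u hu).elim (hpZ u) (hw3 u)
  · exact fun u hu => (he u hu).elim (hpZe u) (hw4 u)
  · simp [Walk.mem_support_append_iff]
  · simp only [walkLambda, Walk.edges_append, Walk.edges_reverse, List.map_append,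
      List.sum_append, List.map_reverse, List.sum_reverse]
    rw [← add_assoc, CharTwo.add_self_eq_zero, zero_add]
end

section
/- Let G be a finite simple graph, Z a cycle in G, λ : E(G) → ℤ/2 an edge labeling, and B a bridge of G with respect to Z containing a vertex v ∉ V(Z). For u ∈ V(B) ∩ V(Z) define L_v(u) = { λ(ω) : ω is a proper walk in B from u to v } ⊆ ℤ/2. Then for any x, y ∈ V(B) ∩ V(Z) (possibly x = y), there exists a nontrivial proper walk in B from x to y if and only if L_v(x) ∪ L_v(y) = {0, 1}. -/
open SimpleGraph

variable {V : Type*}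

theorem aux_step_s4 {G : SimpleGraph V} {B : G.Subgraph} {Zv : Set V} {Ze : Set (Sym2 V)}
    {lam : Sym2 V → ZMod 2} (hZe : ∀ p q, s(p, q) ∈ Ze → p ∈ Zv ∧ q ∈ Zv) {v u c : V}
    (hv : v ∉ Zv) (hc : c ∉ Zv) (h : B.Adj u c) {s : ZMod 2}
    (hs : s ∈ labelSet B Zv Ze lam c v) : lam s(u, c) + s ∈ labelSet B Zv Ze lam u v := by
  obtain ⟨w, ⟨h1, h2, h3, h4⟩, rfl⟩ := hs
  refine ⟨Walk.cons h.adj_sub w, ⟨?_, ?_, ?_, ?_⟩, by simp [walkLambda]⟩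
  · intro p hp
    rw [Walk.support_cons, List.mem_cons] at hp
    rcases hp with rfl | hp
    · exact h.fst_mem
    · exact h1 p hp
  · intro e he
    rw [Walk.edges_cons, List.mem_cons] at he
    rcases he with rfl | he
    · exact h
    · exact h2 e he
  · intro p hp hpZ
    rw [Walk.support_cons, List.mem_cons] at hp
    rcases hp with rfl | hp
    · exact Or.inl rfl
    · rcases h3 p hp hpZ with rfl | rfl
      · exact absurd hpZ hc
      · exact absurd hpZ hv
  · intro e he
    rw [Walk.edges_cons, List.mem_cons] at he
    rcases he with rfl | he
    · exact fun h => hc (hZe _ _ h).2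
    · exact h4 e he

theorem aux_reach {G : SimpleGraph V} {B : G.Subgraph} {Zv : Set V} {Ze : Set (Sym2 V)}
    {lam : Sym2 V → ZMod 2} (hZe : ∀ p q, s(p, q) ∈ Ze → p ∈ Zv ∧ q ∈ Zv) {v a : V}
    (hv : v ∉ Zv) (hvB : v ∈ B.verts)
    (hadj : ∀ x y, G.Adj x y → ReachAvoiding G Zv a x → B.Adj x y)
    {u : V} (w : G.Walk u v) (hw : ∀ p ∈ w.support, p ∉ Zv) (hu : ReachAvoiding G Zv a u) :
    (labelSet B Zv Ze lam u v).Nonempty := by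
  induction w with
  | nil => exact ⟨0, Walk.nil, by simp [IsProperWalkIn, hvB], by simp [walkLambda]⟩
  | @cons u c v hA w ih =>
    have hc : c ∉ Zv := hw c (by simp)
    obtain ⟨q, hq⟩ := hu
    have hrc : ReachAvoiding G Zv a c := by
      refine ⟨q.concat hA, ?_⟩
      intro p hp
      rw [Walk.support_concat, List.mem_append] at hp
      rcases hp with hp | hp
      · exact hq p hp
      · simp at hp; exact hp ▸ hc
    obtain ⟨s, hs⟩ := ih hv hvB (fun p hp => hw p (by simp [hp])) hrc
    exact ⟨_, aux_step_s4 hZe hv hc (hadj _ _ hA ⟨q, hq⟩) hs⟩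

theorem aux_pot {G : SimpleGraph V} {B : G.Subgraph} {Zv : Set V} {Ze : Set (Sym2 V)}
    {lam : Sym2 V → ZMod 2} (hZe : ∀ p q, s(p, q) ∈ Ze → p ∈ Zv ∧ q ∈ Zv) {v : V}
    (hv : v ∉ Zv) (hne : ∀ u ∈ B.verts, (labelSet B Zv Ze lam u v).Nonempty)
    (hZZ : ∀ p q, B.Adj p q → p ∈ Zv → q ∉ Zv) (t : ZMod 2) {u y : V} (w : G.Walk u y)
    (hB : ∀ e ∈ w.edges, e ∈ B.edgeSet) (hy : y ∈ Zv)
    (hL : ∀ p ∈ w.support, p ∈ Zv → labelSet B Zv Ze lam p v ⊆ {t}) :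
    ∀ s ∈ labelSet B Zv Ze lam u v, walkLambda lam w = s + t := by
  have two : ∀ a b : ZMod 2, a = a + b + b := by decide
  induction w with
  | nil =>
    intro s hs
    have : s = t := hL _ (by simp) hy hs
    subst this
    simpa [walkLambda] using two 0 s
  | @cons u c y hA w ih =>
    intro s hs
    have hBA : B.Adj u c := hB s(u, c) (by simp)
    have ih' := ih (fun e he => hB e (by simp [he])) hy (fun p hp => hL p (by simp [hp]))
    have hcons : walkLambda lam (Walk.cons hA w) = lam s(u, c) + walkLambda lam w := by
      simp [walkLambda]
    rw [hcons]
    by_cases hu : u ∈ Zv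
    · have hc := hZZ _ _ hBA hu
      obtain ⟨s', hs'⟩ := hne c hBA.snd_mem
      have e1 : lam s(u, c) + s' = t := hL u (by simp) hu (aux_step_s4 hZe hv hc hBA hs')
      have e2 : s = t := hL u (by simp) hu hs
      rw [ih' s' hs', e2, ← add_assoc, e1]
    · have := ih' _ (aux_step_s4 hZe hv hu hBA.symm hs)
      rw [this, Sym2.eq_swap]
      generalize lam s(c, u) = l
      revert l s t
      intros; rename_i l
      linear_combination (two 0 l).symm

theorem aux_main {G : SimpleGraph V} {B : G.Subgraph} {Zv : Set V} {Ze : Set (Sym2 V)}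
    {lam : Sym2 V → ZMod 2} (hZe : ∀ p q, s(p, q) ∈ Ze → p ∈ Zv ∧ q ∈ Zv)
    (hB : IsBridgeOf G Zv Ze B) {v : V} (hv : v ∉ Zv) (hvB : v ∈ B.verts) :
    (∀ u ∈ B.verts, (labelSet B Zv Ze lam u v).Nonempty) ∧
    (∀ p q, B.Adj p q → p ∈ Zv → q ∉ Zv) := by
  rcases hB with ⟨p, q, _, _, hp, hq, hV, _⟩ | ⟨a, ha, hV, hadj⟩
  · rw [hV] at hvB
    rcases hvB with rfl | rfl
    · exact absurd hp hv
    · exact absurd hq hv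
  · have hoff : ∀ u, ReachAvoiding G Zv a u → u ∉ Zv := fun u ⟨w, hw⟩ => hw u (by simp)
    have hrv : ReachAvoiding G Zv a v := by
      rw [hV] at hvB
      rcases hvB with h | h
      · exact h
      · exact absurd h.1 hv
    have key : ∀ u, ReachAvoiding G Zv a u → (labelSet B Zv Ze lam u v).Nonempty := by
      intro u hu
      obtain ⟨q, hq⟩ := hu
      obtain ⟨r, hr⟩ := hrv
      refine aux_reach hZe hv hvB (fun x y h1 h2 => (hadj x y).2 ⟨h1, Or.inl h2⟩)
        (q.reverse.append r) ?_ ⟨q, hq⟩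
      intro p hp
      rw [Walk.mem_support_append_iff, Walk.support_reverse, List.mem_reverse] at hp
      exact hp.elim (hq p) (hr p)
    refine ⟨?_, ?_⟩
    · intro u hu
      rw [hV] at hu
      rcases hu with hu | ⟨hu, c, hc, hA⟩
      · exact key u hu
      · obtain ⟨s, hs⟩ := key c hc
        exact ⟨_, aux_step_s4 hZe hv (hoff c hc) ((hadj u c).2 ⟨hA.symm, Or.inr hc⟩) hs⟩
    · intro p q h hp
      rcases ((hadj p q).1 h).2 with h | h
      · exact absurd hp (hoff p h)
      · exact hoff q h

theorem aux_join {G : SimpleGraph V} {B : G.Subgraph} {Zv : Set V} {Ze : Set (Sym2 V)}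
    {lam : Sym2 V → ZMod 2} {v x y : V} (hv : v ∉ Zv) {s t : ZMod 2}
    (hs : s ∈ labelSet B Zv Ze lam x v) (ht : t ∈ labelSet B Zv Ze lam y v) (hst : s + t ≠ 0) :
    ∃ w : G.Walk x y, IsProperWalkIn B Zv Ze w ∧ walkLambda lam w ≠ 0 := by
  obtain ⟨p, ⟨p1, p2, p3, p4⟩, rfl⟩ := hs
  obtain ⟨q, ⟨q1, q2, q3, q4⟩, rfl⟩ := ht
  refine ⟨p.append q.reverse, ⟨?_, ?_, ?_, ?_⟩, ?_⟩
  · intro u hu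
    rw [Walk.mem_support_append_iff, Walk.support_reverse, List.mem_reverse] at hu
    exact hu.elim (p1 u) (q1 u)
  · intro u hu
    rw [Walk.edges_append, Walk.edges_reverse, List.mem_append, List.mem_reverse] at hu
    exact hu.elim (p2 u) (q2 u)
  · intro u hu huZ
    rw [Walk.mem_support_append_iff, Walk.support_reverse, List.mem_reverse] at hu
    rcases hu with hu | hu
    · rcases p3 u hu huZ with h | h
      · exact Or.inl h
      · exact absurd (h ▸ huZ) hv
    · rcases q3 u hu huZ with h | h
      · exact Or.inr h
      · exact absurd (h ▸ huZ) hv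
  · intro u hu
    rw [Walk.edges_append, Walk.edges_reverse, List.mem_append, List.mem_reverse] at hu
    exact hu.elim (p4 u) (q4 u)
  · simpa [walkLambda, Walk.edges_append, Walk.edges_reverse, List.sum_reverse] using hst

/-- For a bridge `B` with a reference vertex `v ∉ V(Z)` and vertices
`x, y ∈ V(B) ∩ V(Z)` (possibly equal), there is a nontrivial proper walk in `B` from `x`
to `y` if and only if `L_v(x) ∪ L_v(y) = {0, 1}`. -/
theorem statement4 [Fintype V] (G : SimpleGraph V) (lam : Sym2 V → ZMod 2)
    (z₀ : V) (Z : G.Walk z₀ z₀) (hZ : Z.IsCycle) (B : G.Subgraph)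
    (hB : IsBridgeOf G {u | u ∈ Z.support} {e | e ∈ Z.edges} B)
    (v : V) (hvB : v ∈ B.verts) (hvZ : v ∉ Z.support)
    (x y : V) (hxB : x ∈ B.verts) (hxZ : x ∈ Z.support)
    (hyB : y ∈ B.verts) (hyZ : y ∈ Z.support) :
    (∃ w : G.Walk x y, IsProperWalkIn B {u | u ∈ Z.support} {e | e ∈ Z.edges} w ∧
        walkLambda lam w ≠ 0) ↔
      labelSet B {u | u ∈ Z.support} {e | e ∈ Z.edges} lam x v ∪
          labelSet B {u | u ∈ Z.support} {e | e ∈ Z.edges} lam y v = {0, 1} := by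
  have hZe : ∀ p q, s(p, q) ∈ {e | e ∈ Z.edges} →
      p ∈ {u | u ∈ Z.support} ∧ q ∈ {u | u ∈ Z.support} := fun p q h =>
    ⟨Z.fst_mem_support_of_mem_edges h, Z.snd_mem_support_of_mem_edges h⟩
  have hv : v ∉ {u | u ∈ Z.support} := hvZ
  have hx : x ∈ {u | u ∈ Z.support} := hxZ
  have hy : y ∈ {u | u ∈ Z.support} := hyZ
  obtain ⟨hne, hZZ⟩ := aux_main (lam := lam) hZe hB hv hvB
  clear hxZ hyZ hvZ hB
  generalize {u | u ∈ Z.support} = Zv at *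
  generalize {e | e ∈ Z.edges} = Ze at *
  have two : ∀ a : ZMod 2, a = 0 ∨ a = 1 := by decide
  obtain ⟨s, hs⟩ := hne x hxB
  obtain ⟨s', hs'⟩ := hne y hyB
  constructor
  · rintro ⟨w, ⟨_, w2, w3, _⟩, hw⟩
    by_contra hcon
    apply hw
    have hall : ∀ r ∈ labelSet B Zv Ze lam x v ∪ labelSet B Zv Ze lam y v, r = s := by
      intro r hr
      by_contra hrs
      apply hcon
      have hs0 : s ∈ labelSet B Zv Ze lam x v ∪ labelSet B Zv Ze lam y v := Or.inl hs
      ext k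
      simp only [Set.mem_insert_iff, Set.mem_singleton_iff]
      refine ⟨fun _ => two k, fun _ => ?_⟩
      have hk : k = r ∨ k = s := by
        clear * - hrs
        revert k r s
        decide
      rcases hk with rfl | rfl
      · exact hr
      · exact hs0
    have := aux_pot hZe hv hne hZZ s w w2 hy (by
      intro p hp hpZ k hk
      rcases w3 p hp hpZ with rfl | rfl
      · exact hall k (Or.inl hk)
      · exact hall k (Or.inr hk)) s hs
    rw [this]
    exact CharTwo.add_self_eq_zero s
  · intro h
    have h1 : s' + 1 ∈ labelSet B Zv Ze lam x v ∪ labelSet B Zv Ze lam y v := by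
      rw [h]; exact two _
    have h2 : s + 1 ∈ labelSet B Zv Ze lam x v ∪ labelSet B Zv Ze lam y v := by
      rw [h]; exact two _
    by_cases hss : s + s' ≠ 0
    · exact aux_join hv hs hs' hss
    · have e1 : s' + 1 + s' ≠ 0 := by
        clear * -
        revert s'
        decide
      have e2 : s + (s + 1) ≠ 0 := by
        clear * -
        revert s
        decide
      rcases h1 with h1 | h1
      · exact aux_join hv h1 hs' e1
      · rcases h2 with h2 | h2
        · have : s = s' := by
            clear * - hss
            revert s s'
            decide
          subst this
          exact aux_join hv hs h1 e2
        · exact aux_join hv hs h2 e2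
end

section
/- Let G be a finite simple graph, Z a cycle in G, λ : E(G) → ℤ/2 an edge labeling, and B a bridge of G with respect to Z containing a vertex v ∉ V(Z). Let x, y ∈ V(B) ∩ V(Z) be two distinct vertices, and suppose that all proper walks in B from x to v have the same λ-value and that all proper walks in B from y to v have the same λ-value (i.e., |L_v(x)| = |L_v(y)| = 1). Then any two proper walks in B from x to y have the same λ-value. -/
open SimpleGraph

variable {V : Type*}

theorem aux_reach_trans {G : SimpleGraph V} {S : Set V} {a b c : V}
    (h : ReachAvoiding G S a b) (W : G.Walk b c) (hW : ∀ u ∈ W.support, u ∉ S) :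
    ReachAvoiding G S a c := by
  obtain ⟨p, hp⟩ := h
  refine ⟨p.append W, fun u hu => ?_⟩
  rw [Walk.mem_support_append_iff] at hu
  rcases hu with hu | hu
  · exact hp u hu
  · exact hW u hu

theorem aux_reach_mem {G : SimpleGraph V} {S : Set V} {a b c : V}
    (h : ReachAvoiding G S a b) (W : G.Walk b c) (hW : ∀ u ∈ W.support, u ∉ S)
    (u : V) (hu : u ∈ W.support) : ReachAvoiding G S a u := by
  classical
  refine aux_reach_trans h (W.takeUntil u hu) fun t ht => hW t ?_
  exact W.support_takeUntil_subset_support hu ht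

theorem aux_proper {G : SimpleGraph V} {S : Set V} {T : Set (Sym2 V)} (B : G.Subgraph)
    (hT : ∀ u w, s(u, w) ∈ T → u ∈ S) (a : V)
    (hBv : B.verts = {b | ReachAvoiding G S a b} ∪
        {z | z ∈ S ∧ ∃ c, ReachAvoiding G S a c ∧ G.Adj c z})
    (hBa : ∀ x y, B.Adj x y ↔
        G.Adj x y ∧ (ReachAvoiding G S a x ∨ ReachAvoiding G S a y))
    {x c v : V} (hx : x ∈ S) (hxc : G.Adj x c) (hc : ReachAvoiding G S a c)
    (W : G.Walk c v) (hW : ∀ u ∈ W.support, u ∉ S) :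
    IsProperWalkIn B S T (Walk.cons hxc W) := by
  refine ⟨?_, ?_, ?_, ?_⟩
  · intro u hu
    rw [Walk.support_cons, List.mem_cons] at hu
    rw [hBv]
    rcases hu with rfl | hu
    · exact Or.inr ⟨hx, c, hc, hxc.symm⟩
    · exact Or.inl (aux_reach_mem hc W hW u hu)
  · intro e he
    rw [Walk.edges_cons, List.mem_cons] at he
    rcases he with rfl | he
    · exact (hBa _ _).2 ⟨hxc, Or.inr hc⟩
    · induction e using Sym2.ind with
      | _ p q =>
        exact (hBa _ _).2 ⟨W.adj_of_mem_edges he,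
          Or.inl (aux_reach_mem hc W hW p (W.fst_mem_support_of_mem_edges he))⟩
  · intro u hu huS
    rw [Walk.support_cons, List.mem_cons] at hu
    rcases hu with rfl | hu
    · exact Or.inl rfl
    · exact absurd huS (hW u hu)
  · intro e he heT
    rw [Walk.edges_cons, List.mem_cons] at he
    rcases he with rfl | he
    · rw [Sym2.eq_swap] at heT
      exact hW c W.start_mem_support (hT _ _ heT)
    · induction e using Sym2.ind with
      | _ p q => exact hW p (W.fst_mem_support_of_mem_edges he) (hT _ _ heT)

theorem aux_cons (lam : Sym2 V → ZMod 2) {G : SimpleGraph V} {x c v : V} (h : G.Adj x c)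
    (W : G.Walk c v) : walkLambda lam (Walk.cons h W) = lam s(x, c) + walkLambda lam W := by
  simp [walkLambda]

theorem aux_append_s5 (lam : Sym2 V → ZMod 2) {G : SimpleGraph V} {x c v : V} (U : G.Walk x c)
    (W : G.Walk c v) : walkLambda lam (U.append W) = walkLambda lam U + walkLambda lam W := by
  simp [walkLambda]

theorem aux_potential (lam : Sym2 V → ZMod 2) {G : SimpleGraph V} (B : G.Subgraph) (D : Set V)
    (φ : V → ZMod 2)
    (h : ∀ a b, a ∈ D → b ∈ D → B.Adj a b → φ a = lam s(a, b) + φ b) {a b : V} (W : G.Walk a b)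
    (hs : ∀ u ∈ W.support, u ∈ D) (he : ∀ e ∈ W.edges, e ∈ B.edgeSet) :
    φ a = walkLambda lam W + φ b := by
  induction W with
  | nil => simp [walkLambda]
  | @cons p q r hpq W ih =>
    have h1 := ih (fun u hu => hs u (by simp [hu])) (fun e h' => he e (by simp [h']))
    have h2 := h p q (hs p (by simp)) (hs q (by simp)) (he s(p, q) (by simp))
    rw [aux_cons, h2, h1, add_assoc]

/-- For a bridge `B` with a reference vertex `v ∉ V(Z)` and distinct
`x, y ∈ V(B) ∩ V(Z)`, if all proper walks in `B` from `x` to `v` have the same `λ`-value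
and likewise for `y`, then any two proper walks in `B` from `x` to `y` have the same
`λ`-value. -/
theorem statement5 [Fintype V] (G : SimpleGraph V) (lam : Sym2 V → ZMod 2)
    (z₀ : V) (Z : G.Walk z₀ z₀) (hZ : Z.IsCycle) (B : G.Subgraph)
    (hB : IsBridgeOf G {u | u ∈ Z.support} {e | e ∈ Z.edges} B)
    (v : V) (hvB : v ∈ B.verts) (hvZ : v ∉ Z.support)
    (x y : V) (hxB : x ∈ B.verts) (hxZ : x ∈ Z.support)
    (hyB : y ∈ B.verts) (hyZ : y ∈ Z.support) (hxy : x ≠ y)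
    (hLx : ∀ w₁ w₂ : G.Walk x v,
      IsProperWalkIn B {u | u ∈ Z.support} {e | e ∈ Z.edges} w₁ →
      IsProperWalkIn B {u | u ∈ Z.support} {e | e ∈ Z.edges} w₂ →
      walkLambda lam w₁ = walkLambda lam w₂)
    (hLy : ∀ w₁ w₂ : G.Walk y v,
      IsProperWalkIn B {u | u ∈ Z.support} {e | e ∈ Z.edges} w₁ →
      IsProperWalkIn B {u | u ∈ Z.support} {e | e ∈ Z.edges} w₂ →
      walkLambda lam w₁ = walkLambda lam w₂) :
    ∀ w₁ w₂ : G.Walk x y,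
      IsProperWalkIn B {u | u ∈ Z.support} {e | e ∈ Z.edges} w₁ →
      IsProperWalkIn B {u | u ∈ Z.support} {e | e ∈ Z.edges} w₂ →
      walkLambda lam w₁ = walkLambda lam w₂ := by
  classical
  set S : Set V := {u | u ∈ Z.support} with hS
  set T : Set (Sym2 V) := {e | e ∈ Z.edges} with hTd
  have hT : ∀ u w, s(u, w) ∈ T → u ∈ S := fun u w h => Z.fst_mem_support_of_mem_edges h
  rcases hB with ⟨p, q, -, -, hp, hq, hv, -⟩ | ⟨a, ha, hBv, hBa⟩
  · rw [hv] at hvB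
    rcases hvB with rfl | hvB
    · exact absurd hp hvZ
    · rw [Set.mem_singleton_iff] at hvB
      subst hvB
      exact absurd hq hvZ
  have hav : ReachAvoiding G S a v := by
    rw [hBv] at hvB
    rcases hvB with h | h
    · exact h
    · exact absurd h.1 hvZ
  have hnS : ∀ c, ReachAvoiding G S a c → c ∉ S := fun c ⟨p, hp⟩ => hp c p.end_mem_support
  have hcon : ∀ c d, ReachAvoiding G S a c → ReachAvoiding G S a d →
      ∃ W : G.Walk c d, ∀ u ∈ W.support, u ∉ S := by
    rintro c d ⟨p, hp⟩ hd
    refine aux_reach_trans ⟨p.reverse, fun u hu => hp u (by simpa using hu)⟩ hd.choose hd.choose_spec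
  have hnb : ∀ z, z ∈ B.verts → z ∈ S → ∃ c, ReachAvoiding G S a c ∧ G.Adj z c := by
    intro z hz hzS
    rw [hBv] at hz
    rcases hz with h | ⟨-, c, hc, h⟩
    · exact absurd hzS (hnS z h)
    · exact ⟨c, hc, h.symm⟩
  obtain ⟨cx, hcx, hxcx⟩ := hnb x hxB hxZ
  obtain ⟨cy, hcy, hycy⟩ := hnb y hyB hyZ
  have hf : ∃ f : V → ZMod 2, ∀ u, ReachAvoiding G S a u →
      ∃ W : G.Walk u v, (∀ t ∈ W.support, t ∉ S) ∧ walkLambda lam W = f u := by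
    refine ⟨fun u => if h : ReachAvoiding G S a u then
      walkLambda lam (hcon u v h hav).choose else 0, fun u hu => ?_⟩
    refine ⟨(hcon u v hu hav).choose, (hcon u v hu hav).choose_spec, ?_⟩
    simp [hu]
  obtain ⟨f, hf⟩ := hf
  have key : ∀ z, z ∈ S → (∀ w₁ w₂ : G.Walk z v, IsProperWalkIn B S T w₁ →
      IsProperWalkIn B S T w₂ → walkLambda lam w₁ = walkLambda lam w₂) →
      ∀ c d, ReachAvoiding G S a c → ReachAvoiding G S a d → G.Adj z c → G.Adj z d →
      ∀ (W : G.Walk c v) (W' : G.Walk d v), (∀ t ∈ W.support, t ∉ S) →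
      (∀ t ∈ W'.support, t ∉ S) →
      lam s(z, c) + walkLambda lam W = lam s(z, d) + walkLambda lam W' := by
    intro z hz hL c d hc hd hzc hzd W W' hW hW'
    have := hL _ _ (aux_proper B hT a hBv hBa hz hzc hc W hW)
      (aux_proper B hT a hBv hBa hz hzd hd W' hW')
    rwa [aux_cons, aux_cons] at this
  have hCC : ∀ c d, ReachAvoiding G S a c → ReachAvoiding G S a d → G.Adj c d →
      f c = lam s(c, d) + f d := by
    intro c d hc hd hcd
    obtain ⟨U, hU⟩ := hcon cx c hcx hc
    obtain ⟨W, hW, hWf⟩ := hf c hc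
    obtain ⟨W', hW', hWf'⟩ := hf d hd
    have := key x hxZ hLx cx cx hcx hcx hxcx hxcx (U.append W) (U.append (Walk.cons hcd W'))
      (by
        intro t ht
        rw [Walk.mem_support_append_iff] at ht
        exact ht.elim (hU t) (hW t))
      (by
        intro t ht
        rw [Walk.mem_support_append_iff, Walk.support_cons, List.mem_cons] at ht
        rcases ht with ht | rfl | ht
        · exact hU t ht
        · exact hnS _ hc
        · exact hW' t ht)
    rw [aux_append_s5, aux_append_s5, aux_cons, hWf, hWf'] at this
    exact add_left_cancel (add_left_cancel this)
  have hZC : ∀ z, z ∈ S → (∀ w₁ w₂ : G.Walk z v, IsProperWalkIn B S T w₁ →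
      IsProperWalkIn B S T w₂ → walkLambda lam w₁ = walkLambda lam w₂) →
      ∀ c d, ReachAvoiding G S a c → ReachAvoiding G S a d → G.Adj z c → G.Adj z d →
      lam s(z, c) + f c = lam s(z, d) + f d := by
    intro z hz hL c d hc hd hzc hzd
    obtain ⟨W, hW, hWf⟩ := hf c hc
    obtain ⟨W', hW', hWf'⟩ := hf d hd
    rw [← hWf, ← hWf']
    exact key z hz hL c d hc hd hzc hzd W W' hW hW'
  let φ : V → ZMod 2 := fun u => if u = x then lam s(x, cx) + f cx else
    if u = y then lam s(y, cy) + f cy else f u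
  have hφx : φ x = lam s(x, cx) + f cx := by simp [φ]
  have hφy : φ y = lam s(y, cy) + f cy := by simp [φ, hxy.symm]
  have hφC : ∀ c, ReachAvoiding G S a c → φ c = f c := by
    intro c hc
    have h1 : c ≠ x := by rintro rfl; exact hnS _ hc hxZ
    have h2 : c ≠ y := by rintro rfl; exact hnS _ hc hyZ
    simp [φ, h1, h2]
  have hstep : ∀ z c, (z = x ∨ z = y ∨ ReachAvoiding G S a z) → ReachAvoiding G S a c →
      G.Adj z c → φ z = lam s(z, c) + φ c := by
    rintro z c (rfl | rfl | hz) hc hzc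
    · rw [hφx, hφC c hc]
      exact hZC _ hxZ hLx _ _ hcx hc hxcx hzc
    · rw [hφy, hφC c hc]
      exact hZC _ hyZ hLy _ _ hcy hc hycy hzc
    · rw [hφC z hz, hφC c hc]
      exact hCC z c hz hc hzc
  have hpot := aux_potential (a := x) (b := y) lam B {u | u = x ∨ u = y ∨ ReachAvoiding G S a u} φ (by
    intro p q hp hq hpq
    rw [hBa] at hpq
    rcases hpq with ⟨hpq, h | h⟩
    · rw [hstep q p hq h hpq.symm, Sym2.eq_swap, ← add_assoc, CharTwo.add_self_eq_zero, zero_add]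
    · exact hstep p q hp h hpq)
  have hfin : ∀ w : G.Walk x y, IsProperWalkIn B S T w → φ x = walkLambda lam w + φ y := by
    rintro w ⟨h1, h2, h3, -⟩
    refine hpot w (fun u hu => ?_) h2
    have hb := h1 u hu
    rw [hBv] at hb
    rcases hb with hb | hb
    · exact Or.inr (Or.inr hb)
    · rcases h3 u hu hb.1 with h | h
      · exact Or.inl h
      · exact Or.inr (Or.inl h)
  intro w₁ w₂ hw₁ hw₂
  exact add_right_cancel ((hfin w₁ hw₁).symm.trans (hfin w₂ hw₂))
end

section
/- Let G be a 2-connected finite simple graph, Z a cycle in G, λ : E(G) → ℤ/2 an edge labeling, and B a bridge of G with respect to Z such that every proper path in B with both endpoints in V(B) ∩ V(Z) is nontrivial. Then every cycle of G contained in B is trivial, i.e., λ(N) = 0 for every cycle N contained in B. -/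
open SimpleGraph

variable {V : Type*}

section helpers

theorem wl_append (lam : Sym2 V → ZMod 2) {G : SimpleGraph V} {x y z : V} (p : G.Walk x y)
    (q : G.Walk y z) : walkLambda lam (p.append q) = walkLambda lam p + walkLambda lam q := by
  simp [walkLambda, Walk.edges_append]

theorem wl_reverse (lam : Sym2 V → ZMod 2) {G : SimpleGraph V} {x y : V} (p : G.Walk x y) :
    walkLambda lam p.reverse = walkLambda lam p := by
  simp [walkLambda, Walk.edges_reverse, List.sum_reverse]

/-- a path from `x` to `y` with vertex set `A`, edges in `F`, value `t` -/
def HasP (G : SimpleGraph V) (F : Set (Sym2 V)) (lam : Sym2 V → ZMod 2) (A : Set V) (x y : V)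
    (t : ZMod 2) : Prop :=
  ∃ w : G.Walk x y, w.IsPath ∧ {u | u ∈ w.support} = A ∧ (∀ e ∈ w.edges, e ∈ F) ∧
    walkLambda lam w = t

variable {G : SimpleGraph V} {F : Set (Sym2 V)} {lam : Sym2 V → ZMod 2}

theorem HasP.left {A : Set V} {x y : V} {t : ZMod 2} (h : HasP G F lam A x y t) : x ∈ A := by
  obtain ⟨w, _, rfl, _⟩ := h
  simp

theorem HasP.right {A : Set V} {x y : V} {t : ZMod 2} (h : HasP G F lam A x y t) : y ∈ A := by
  obtain ⟨w, _, rfl, _⟩ := h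
  simp

theorem HasP.symm {A : Set V} {x y : V} {t : ZMod 2} (h : HasP G F lam A x y t) :
    HasP G F lam A y x t := by
  obtain ⟨w, hp, rfl, hF, rfl⟩ := h
  exact ⟨w.reverse, hp.reverse, by simp, by simpa using hF, wl_reverse lam w⟩

theorem path_append {x y z : V} {p : G.Walk x y} {q : G.Walk y z} (hp : p.IsPath) (hq : q.IsPath)
    (h : ∀ u, u ∈ p.support → u ∈ q.support → u = y) : (p.append q).IsPath := by
  rw [Walk.isPath_def, Walk.support_append, List.nodup_append']
  refine ⟨hp.support_nodup, hq.support_nodup.tail, ?_⟩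
  intro u hu hu'
  have := h u hu (List.mem_of_mem_tail hu')
  subst this
  have h2 := hq.support_nodup
  rw [← Walk.cons_tail_support] at h2
  exact (List.nodup_cons.1 h2).1 hu'

theorem HasP.trans {A B : Set V} {x y z : V} {s t : ZMod 2} (h : HasP G F lam A x y s)
    (h' : HasP G F lam B y z t) (hAB : ∀ u, u ∈ A → u ∈ B → u = y) :
    HasP G F lam (A ∪ B) x z (s + t) := by
  obtain ⟨p, hp, rfl, hF, rfl⟩ := h
  obtain ⟨q, hq, rfl, hF', rfl⟩ := h'
  refine ⟨p.append q, path_append hp hq hAB, ?_, ?_, wl_append _ _ _⟩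
  · ext u; simp [Walk.mem_support_append_iff]
  · intro e he
    rw [Walk.edges_append, List.mem_append] at he
    exact he.elim (hF e) (hF' e)

theorem HasP.split {A : Set V} {x y u : V} {t : ZMod 2} (h : HasP G F lam A x y t) (hu : u ∈ A) :
    ∃ A1 A2 t1 t2, A1 ∪ A2 = A ∧ (∀ v, v ∈ A1 → v ∈ A2 → v = u) ∧ HasP G F lam A1 x u t1 ∧
      HasP G F lam A2 u y t2 ∧ t1 + t2 = t := by
  obtain ⟨p, hp, rfl, hF, rfl⟩ := h
  obtain ⟨q, r, rfl⟩ := Walk.mem_support_iff_exists_append.1 hu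
  refine ⟨_, _, _, _, ?_, ?_, ⟨q, hp.of_append_left, rfl, ?_, rfl⟩,
    ⟨r, hp.of_append_right, rfl, ?_, rfl⟩, (wl_append _ _ _).symm⟩
  · ext v; simp [Walk.mem_support_append_iff]
  · intro v hv hv'
    by_contra hne
    exact hp.ne_of_mem_support_of_append hne hv hv' rfl
  · intro e he; exact hF e (by simp [Walk.edges_append, he])
  · intro e he; exact hF e (by simp [Walk.edges_append, he])

def OddLinked (G : SimpleGraph V) (F : Set (Sym2 V)) (lam : Sym2 V → ZMod 2) (S : Set V) : Prop :=
  ∀ x ∈ S, ∀ y ∈ S, x ≠ y → ∀ t, ∃ A, A ⊆ S ∧ HasP G F lam A x y t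

theorem OddLinked.ear_mixed {S E : Set V} (hS : OddLinked G F lam S) {p r : V} (hp : p ∈ S)
    (hr : r ∈ S) (hpr : p ≠ r) {te : ZMod 2} (hE : HasP G F lam E p r te)
    (hES : ∀ u, u ∈ E → u ∈ S → u = p ∨ u = r) {x y : V} (hx : x ∈ S) (hy : y ∈ E) (hyS : y ∉ S)
    (t : ZMod 2) : ∃ A, A ⊆ S ∪ E ∧ HasP G F lam A x y t := by
  obtain ⟨E1, E2, t1, t2, hU, hI, h1, h2, -⟩ := hE.split hy
  have := h1.left; have := h2.left; have := h1.right; have := h2.right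
  by_cases hxp : x = p
  · have hxr : x ≠ r := by rw [hxp]; exact hpr
    obtain ⟨A, hAS, hA⟩ := hS x hx r hr hxr (t - t2)
    refine ⟨A ∪ E2, by grind, ?_⟩
    have := hA.trans h2.symm (by grind)
    simpa using this
  · obtain ⟨A, hAS, hA⟩ := hS x hx p hp hxp (t - t1)
    refine ⟨A ∪ E1, by grind, ?_⟩
    have := hA.trans h1 (by grind)
    simpa using this

theorem OddLinked.ear {S E : Set V} (hS : OddLinked G F lam S) {p r : V} (hp : p ∈ S)
    (hr : r ∈ S) (hpr : p ≠ r) {te : ZMod 2} (hE : HasP G F lam E p r te)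
    (hES : ∀ u, u ∈ E → u ∈ S → u = p ∨ u = r) : OddLinked G F lam (S ∪ E) := by
  intro x hx y hy hxy t
  by_cases hxS : x ∈ S
  · by_cases hyS : y ∈ S
    · obtain ⟨A, hA, h⟩ := hS x hxS y hyS hxy t
      exact ⟨A, hA.trans Set.subset_union_left, h⟩
    · exact hS.ear_mixed hp hr hpr hE hES hxS (hy.resolve_left hyS) hyS t
  · by_cases hyS : y ∈ S
    · obtain ⟨A, hA, h⟩ := hS.ear_mixed hp hr hpr hE hES hyS (hx.resolve_left hxS) hxS t
      exact ⟨A, hA, h.symm⟩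
    · replace hx := hx.resolve_left hxS
      replace hy := hy.resolve_left hyS
      obtain ⟨E1, E2, t1, t2, hU, hI, h1, h2, -⟩ := hE.split hy
      have := h1.left; have := h2.left; have := h1.right; have := h2.right
      rw [← hU] at hx
      rcases hx with hx | hx
      · obtain ⟨E3, E4, t3, t4, hU', hI', h3, h4, -⟩ := h1.split hx
        have := h3.left; have := h4.left; have := h3.right; have := h4.right
        obtain ⟨A, hAS, hA⟩ := hS p hp r hr hpr (t - t3 - t2)
        have := (h3.symm.trans hA (by grind)).trans h2.symm (by grind)
        have e : t3 + (t - t3 - t2) + t2 = t := by ring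
        rw [e] at this
        exact ⟨_, by grind, this⟩
      · obtain ⟨E3, E4, t3, t4, hU', hI', h3, h4, -⟩ := h2.split hx
        have := h3.left; have := h4.left; have := h3.right; have := h4.right
        obtain ⟨A, hAS, hA⟩ := hS p hp r hr hpr (t - t1 - t4)
        have := ((h1.symm.trans hA (by grind)).trans h4.symm (by grind)).symm
        have e : t1 + (t - t1 - t4) + t4 = t := by ring
        rw [e] at this
        exact ⟨_, by grind, this⟩

/-- first hitting lemma -/
theorem exists_hit {S T : Set V} {x y : V} (hx : x ∈ S) (hy : y ∈ T) (w : G.Walk x y) :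
    ∃ s ∈ S, ∃ t ∈ T, ∃ p : G.Walk s t, p.IsPath ∧ (∀ u ∈ p.support, u ∈ w.support) ∧
      (∀ u ∈ p.support, u ∈ S → u = s) ∧ (∀ u ∈ p.support, u ∈ T → u = t) := by
  classical
  induction h : w.length using Nat.strong_induction_on generalizing x y with
  | _ n ih =>
    by_cases h1 : ∃ u ∈ w.support, u ∈ S ∧ u ≠ x
    · obtain ⟨u, hu, huS, hux⟩ := h1
      obtain ⟨s, hs, t, ht, p, hp, h1, h2, h3⟩ :=
        ih _ (h ▸ Walk.length_dropUntil_lt_length hu hux) huS hy (w.dropUntil u hu) rfl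
      exact ⟨s, hs, t, ht, p, hp,
        fun v hv => Walk.support_dropUntil_subset_support _ _ (h1 v hv), h2, h3⟩
    by_cases h2 : ∃ u ∈ w.support, u ∈ T ∧ u ≠ y
    · obtain ⟨u, hu, huS, hux⟩ := h2
      obtain ⟨s, hs, t, ht, p, hp, h1, h2, h3⟩ :=
        ih _ (h ▸ Walk.length_takeUntil_lt_length hu hux) hx huS (w.takeUntil u hu) rfl
      exact ⟨s, hs, t, ht, p, hp,
        fun v hv => Walk.support_takeUntil_subset_support _ _ (h1 v hv), h2, h3⟩
    push Not at h1 h2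
    exact ⟨x, hx, y, hy, w.bypass, w.bypass_isPath, fun v hv => w.support_bypass_subset_support hv,
      fun v hv => h1 v (w.support_bypass_subset_support hv),
      fun v hv => h2 v (w.support_bypass_subset_support hv)⟩

/-- the vertex set of a nontrivial cycle is odd-linked -/
theorem oddLinked_cycle {n : V} (N : G.Walk n n) (hN : N.IsCycle) (hF : ∀ e ∈ N.edges, e ∈ F)
    (hl : walkLambda lam N ≠ 0) : OddLinked G F lam {u | u ∈ N.support} := by
  classical
  intro x hx y hy hxy t
  have hl' : walkLambda lam (N.rotate x hx) ≠ 0 := by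
    have := ((N.rotate_edges x hx).perm.map lam).sum_eq
    unfold walkLambda at *
    rwa [this]
  have hF' : ∀ e ∈ (N.rotate x hx).edges, e ∈ F := fun e he =>
    hF e ((N.rotate_edges x hx).mem_iff.1 he)
  have hN' : (N.rotate x hx).IsCycle := hN.rotate hx
  have hs : ∀ u, u ∈ (N.rotate x hx).support ↔ u ∈ N.support := fun u =>
    N.mem_support_rotate_iff x hx
  generalize N.rotate x hx = M at *
  obtain ⟨q, r, rfl⟩ := Walk.mem_support_iff_exists_append.1 ((hs y).2 hy)
  have hnd := hN'.support_nodup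
  rw [Walk.tail_support_append, List.nodup_append'] at hnd
  obtain ⟨hq, hr, hd⟩ := hnd
  have hyq : y ∈ q.support.tail := by
    have : y ∈ q.support := by simp
    rw [← Walk.cons_tail_support, List.mem_cons] at this
    exact this.resolve_left hxy.symm
  have hxr : x ∈ r.support.tail := by
    have : x ∈ r.support := by simp
    rw [← Walk.cons_tail_support, List.mem_cons] at this
    exact this.resolve_left hxy
  have hqp : q.IsPath := by
    rw [Walk.isPath_def, ← Walk.cons_tail_support, List.nodup_cons]
    exact ⟨fun h => hd h hxr, hq⟩
  have hrp : r.IsPath := by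
    rw [Walk.isPath_def, ← Walk.cons_tail_support, List.nodup_cons]
    exact ⟨fun h => hd hyq h, hr⟩
  rw [wl_append] at hl'
  have key : ∀ a b t : ZMod 2, a + b ≠ 0 → t = a ∨ t = b := by decide
  rcases key _ _ t hl' with rfl | rfl
  · exact ⟨_, fun u hu => (hs u).1 (by simp_all [Walk.mem_support_append_iff]), q, hqp, rfl,
      fun e he => hF' e (by simp [Walk.edges_append, he]), rfl⟩
  · refine ⟨_, fun u hu => (hs u).1 ?_, HasP.symm ⟨r, hrp, rfl,
      fun e he => hF' e (by simp [Walk.edges_append, he]), rfl⟩⟩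
    simp_all [Walk.mem_support_append_iff]

theorem core [Finite V] (h2 : TwoConnected G) {Zs C : Set V} (hZ2 : ∀ p, ∃ z ∈ Zs, z ≠ p)
    (H1 : ∀ x ∈ Zs, ∀ y ∈ Zs, x ≠ y → ∀ A t, HasP G F lam A x y t → t ≠ 0)
    (H2 : ∀ s t (w : G.Walk s t), w.IsPath → (s ∈ C ∨ s ∈ Zs) →
      (∀ u ∈ w.support, u ∈ Zs → u = t) →
      (∀ e ∈ w.edges, e ∈ F) ∧ ∀ u ∈ w.support, u ∈ C ∨ u ∈ Zs) :
    ∀ S : Set V, OddLinked G F lam S → (∀ p, ∃ s ∈ S, s ≠ p) → (∀ u ∈ S, u ∈ C ∨ u ∈ Zs) →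
      False := by
  intro S
  induction h : (Sᶜ).ncard using Nat.strong_induction_on generalizing S with
  | _ n ih =>
    intro hS hS2 hSC
    obtain ⟨z, hz, -⟩ := hZ2 h2.2.1.nonempty.some
    obtain ⟨s, hs, -⟩ := hS2 z
    obtain ⟨p, hp, z1, hz1, R, hRp, -, hRS, hRZ⟩ :=
      exists_hit hs hz (h2.2.1.preconnected s z).some
    obtain ⟨hRF, hRC⟩ := H2 p z1 R hRp (hSC p hp) hRZ
    have hPR : HasP G F lam {u | u ∈ R.support} p z1 (walkLambda lam R) :=
      ⟨R, hRp, rfl, hRF, rfl⟩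
    obtain ⟨s', hs', hs'p⟩ := hS2 p
    obtain ⟨z', hz', hz'p⟩ := hZ2 p
    obtain ⟨w⟩ := (h2.2.2 p).preconnected ⟨s', hs'p⟩ ⟨z', hz'p⟩
    obtain ⟨r, hr, q, hq, Q, hQp, hQw, hQS, hQT⟩ :=
      exists_hit (S := S \ {p}) (T := (Zs ∪ {u | u ∈ R.support}) \ {p})
        (x := s') (y := z') ⟨hs', hs'p⟩ ⟨Or.inl hz', hz'p⟩
        (w.map (Embedding.induce {u | u ≠ p}).toHom)
    have hpQ : p ∉ Q.support := by
      intro hh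
      have := hQw p hh
      obtain ⟨a, -, ha⟩ := List.mem_map.1 ((Walk.support_map (Embedding.induce _).toHom w) ▸ this)
      exact a.2 ha
    have hQZ : ∀ u ∈ Q.support, u ∈ Zs → u = q := fun u hu huZ =>
      hQT u hu ⟨Or.inl huZ, by rintro rfl; exact hpQ hu⟩
    obtain ⟨hQF, hQC⟩ := H2 r q Q hQp (hSC r hr.1) hQZ
    have hPQ : HasP G F lam {u | u ∈ Q.support} r q (walkLambda lam Q) :=
      ⟨Q, hQp, rfl, hQF, rfl⟩
    have hrp : r ≠ p := hr.2
    have hqp : q ≠ p := hq.2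
    have hQS' : ∀ u ∈ Q.support, u ∈ S → u = r := fun u hu huS =>
      hQS u hu ⟨huS, by rintro rfl; exact hpQ hu⟩
    have hQR : ∀ u ∈ Q.support, u ∈ R.support → u = q := fun u hu huR =>
      hQT u hu ⟨Or.inr huR, by rintro rfl; exact hpQ hu⟩
    by_cases hqR : q ∈ R.support
    · obtain ⟨R1, R2, t1, t2, hU, hI, hP1, hP2, -⟩ := hPR.split hqR
      have hR1 : ∀ u ∈ R1, u ∈ R.support := fun u hu => by
        have : u ∈ R1 ∪ R2 := Or.inl hu
        rw [hU] at this; exact this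
      have hE := hP1.trans hPQ.symm (fun u h1 h2 => hQR u h2 (hR1 u h1))
      have hnew := hS.ear hp hr.1 hrp.symm hE (by
        rintro u (hu | hu) huS
        · exact Or.inl (hRS u (hR1 u hu) huS)
        · exact Or.inr (hQS' u hu huS))
      refine ih _ ?_ _ rfl hnew ?_ ?_
      · rw [← h]
        apply Set.ncard_lt_ncard _ (Set.toFinite _)
        refine compl_lt_compl_iff_lt.2 ?_
        refine (Set.ssubset_iff_of_subset Set.subset_union_left).2 ?_
        exact ⟨q, Or.inr (Or.inl hP1.right), fun hqS => hqp (hRS q hqR hqS)⟩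
      · intro v
        obtain ⟨s, hs, hsv⟩ := hS2 v
        exact ⟨s, Or.inl hs, hsv⟩
      · rintro u (hu | hu | hu)
        · exact hSC u hu
        · exact hRC u (hR1 u hu)
        · exact hQC u hu
    · have hqZ : q ∈ Zs := hq.1.resolve_right hqR
      obtain ⟨A, hAS, hA⟩ := hS p hp r hr.1 hrp.symm (walkLambda lam R + walkLambda lam Q)
      have hz1R : z1 ∈ R.support := by simp
      have := (hPR.symm.trans hA (fun u hu hu' => hRS u hu (hAS hu'))).trans hPQ (by
        rintro u (hu | hu) hu'
        · exact absurd (hQR u hu' hu ▸ hu) hqR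
        · exact hQS' u hu' (hAS hu))
      refine H1 z1 hz1 q hqZ (by rintro rfl; exact hqR hz1R) _ _ this ?_
      generalize walkLambda lam R = a
      generalize walkLambda lam Q = b
      revert a b; decide

theorem stay {C Zs : Set V} (hC : ∀ u ∈ C, ∀ v, G.Adj u v → v ∉ Zs → v ∈ C)
    (hF : ∀ u v, G.Adj u v → u ∈ C → s(u, v) ∈ F) {s t : V} (w : G.Walk s t) (hw : w.IsPath)
    (hs : s ∈ C ∨ s ∈ Zs) (h : ∀ u ∈ w.support, u ∈ Zs → u = t) :
    (∀ e ∈ w.edges, e ∈ F) ∧ ∀ u ∈ w.support, u ∈ C ∨ u ∈ Zs := by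
  induction w with
  | nil => simpa using hs
  | @cons a b c hab q ih =>
    rw [Walk.cons_isPath_iff] at hw
    have haC : a ∈ C := by
      refine hs.resolve_right fun ha => hw.2 ?_
      rw [h a (by simp) ha]; simp
    have hb : b ∈ C ∨ b ∈ Zs := by
      by_cases hb : b ∈ Zs
      · exact Or.inr hb
      · exact Or.inl (hC a haC b hab hb)
    obtain ⟨h1, h2⟩ := ih hw.1 hb (fun u hu => h u (by simp [hu]))
    constructor
    · intro e he
      rw [Walk.edges_cons, List.mem_cons] at he
      rcases he with rfl | he
      · exact hF a b hab haC
      · exact h1 e he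
    · intro u hu
      rw [Walk.support_cons, List.mem_cons] at hu
      rcases hu with rfl | hu
      · exact Or.inl haC
      · exact h2 u hu

theorem HasP.edge {u v : V} (h : G.Adj u v) (hF : s(u, v) ∈ F) :
    HasP G F lam {u, v} u v (lam s(u, v)) := by
  refine ⟨Walk.cons h Walk.nil, by simp [h.ne], ?_, by simpa using hF, by simp [walkLambda]⟩
  ext x; simp

theorem three_att {C Zs : Set V} (hCZ : ∀ u ∈ C, u ∉ Zs)
    (hC : ∀ u ∈ C, ∀ v, G.Adj u v → v ∉ Zs → v ∈ C)
    (hF : ∀ u v, G.Adj u v → u ∈ C → s(u, v) ∈ F)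
    (hconn : ∀ u ∈ C, ∀ v ∈ C, ∃ w : G.Walk u v, ∀ x ∈ w.support, x ∉ Zs)
    (H : ∀ x ∈ Zs, ∀ y ∈ Zs, x ≠ y → ∀ A t, (∀ u ∈ A, u ∈ C ∨ u = x ∨ u = y) →
      HasP G F lam A x y t → t ≠ 0)
    {z1 z2 z3 c1 c2 c3 : V} (hz1 : z1 ∈ Zs) (hz2 : z2 ∈ Zs) (hz3 : z3 ∈ Zs)
    (hc1 : c1 ∈ C) (hc2 : c2 ∈ C) (hc3 : c3 ∈ C)
    (h1 : G.Adj c1 z1) (h2 : G.Adj c2 z2) (h3 : G.Adj c3 z3)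
    (h12 : z1 ≠ z2) (h13 : z1 ≠ z3) (h23 : z2 ≠ z3) : False := by
  have hn1 := fun h => hCZ z1 h hz1
  have hn2 := fun h => hCZ z2 h hz2
  have hn3 := fun h => hCZ z3 h hz3
  have hit : ∀ u ∈ C, ∀ v ∈ C, ∀ T : Set V, v ∈ T → ∃ t ∈ T, ∃ A l, HasP G F lam A u t l ∧
      (∀ x ∈ A, x ∈ C) ∧ ∀ x ∈ A, x ∈ T → x = t := by
    intro u hu v hv T hvT
    obtain ⟨w, hw⟩ := hconn u hu v hv
    obtain ⟨s, rfl, t, ht, p, hp, hpw, -, hpT⟩ := exists_hit (S := {u}) rfl hvT w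
    obtain ⟨hf, hc⟩ := stay (F := F) hC hF p hp (Or.inl hu)
      (fun x hx hxZ => absurd hxZ (hw x (hpw x hx)))
    exact ⟨t, ht, _, _, ⟨p, hp, rfl, hf, rfl⟩,
      fun x hx => (hc x hx).resolve_right (hw x (hpw x hx)), hpT⟩
  have e1 := (HasP.edge (lam := lam) h1 (hF _ _ h1 hc1)).symm
  have e2 := HasP.edge (lam := lam) h2 (hF _ _ h2 hc2)
  have e3 := (HasP.edge (lam := lam) h3 (hF _ _ h3 hc3)).symm
  obtain ⟨c, rfl, P, l, hP, hPC, -⟩ := hit c1 hc1 c2 hc2 {c2} rfl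
  have hA := (e1.trans hP (by clear hit hconn hC hF H; grind)).trans e2 (by clear hit hconn hC hF H; grind)
  have hAC : ∀ u ∈ {c1, z1} ∪ P ∪ {c, z2}, u ∈ C ∨ u = z1 ∨ u = z2 := by clear hit hconn hC hF H; grind
  have hcA : c ∈ ({c1, z1} ∪ P ∪ {c, z2} : Set V) ∩ C := by clear hit hconn hC hF H; grind
  generalize ({c1, z1} ∪ P ∪ {c, z2} : Set V) = A at *
  obtain ⟨d, hd, Q, m, hQ, hQC, hQA⟩ := hit c3 hc3 c hc2 _ hcA
  have := hQ.left; have := hQ.right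
  have hB := e3.trans hQ (by clear hit hconn hC hF H; grind)
  obtain ⟨A1, A2, t1, t2, hU, hI, hP1, hP2, ht⟩ := hA.split hd.1
  have := hP1.left; have := hP2.left; have := hP1.right; have := hP2.right
  have k1 := H z1 hz1 z2 hz2 h12 _ _ hAC hA
  have k2 := H z1 hz1 z3 hz3 h13 _ _ (by clear hit hconn hC hF H; grind) (hP1.trans hB.symm (by clear hit hconn hC hF H; grind))
  have k3 := H z2 hz2 z3 hz3 h23 _ _ (by clear hit hconn hC hF H; grind) (hP2.symm.trans hB.symm (by clear hit hconn hC hF H; grind))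
  rw [← ht] at k1
  have key : ∀ a b c : ZMod 2, a + b ≠ 0 → a + c ≠ 0 → b + c ≠ 0 → False := by decide
  exact key _ _ _ k1 k2 k3

end helpers

/-- In a 2-connected graph, if every proper path in a bridge `B` with both
(distinct) endpoints in `V(B) ∩ V(Z)` is nontrivial, then every cycle of `G` contained in
`B` is trivial. -/
theorem statement8 [Fintype V] (G : SimpleGraph V) (lam : Sym2 V → ZMod 2)
    (h2 : TwoConnected G)
    (z₀ : V) (Z : G.Walk z₀ z₀) (hZ : Z.IsCycle) (B : G.Subgraph)
    (hB : IsBridgeOf G {u | u ∈ Z.support} {e | e ∈ Z.edges} B)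
    (hnt : ∀ x y, x ∈ B.verts → x ∈ Z.support → y ∈ B.verts → y ∈ Z.support → x ≠ y →
      ∀ w : G.Walk x y, w.IsPath →
        IsProperWalkIn B {u | u ∈ Z.support} {e | e ∈ Z.edges} w →
        walkLambda lam w ≠ 0) :
    ∀ (n : V) (N : G.Walk n n), N.IsCycle → (∀ e ∈ N.edges, e ∈ B.edgeSet) →
      walkLambda lam N = 0 := by
  classical
  intro n N hN hNB
  have hNtwo : ∀ (m : V) (M : G.Walk m m), M.IsCycle → ∀ p, ∃ s ∈ {u | u ∈ M.support}, s ≠ p := by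
    intro m M hM p
    by_cases hmp : m = p
    · subst hmp
      exact ⟨M.snd, M.getVert_mem_support 1, (M.adj_snd hM.not_nil).ne'⟩
    · exact ⟨m, by simp, hmp⟩
  rcases hB with ⟨u, v, -, -, -, -, -, hadj⟩ | ⟨a, ha, -, hadj⟩
  · exfalso
    have h3 := hN.three_le_length
    have hsub : N.edges ⊆ [s(u, v)] := by
      intro e he
      have := hNB e he
      induction e with
      | _ x y =>
        rw [Subgraph.mem_edgeSet, hadj] at this
        simp [this]
    have := (hN.edges_nodup.subperm hsub).length_le
    rw [Walk.length_edges] at this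
    simp at this
    omega
  · by_contra hl
    set Zs : Set V := {u | u ∈ Z.support} with hZs
    set C : Set V := {b | ReachAvoiding G Zs a b} with hCdef
    have hCZ : ∀ u ∈ C, u ∉ Zs := fun u ⟨w, hw⟩ => hw u (by simp)
    have hC : ∀ u ∈ C, ∀ v, G.Adj u v → v ∉ Zs → v ∈ C := by
      rintro u ⟨w, hw⟩ v huv hv
      refine ⟨w.concat huv, ?_⟩
      intro x hx
      rw [Walk.support_concat, List.mem_append, List.mem_singleton] at hx
      rcases hx with hx | rfl
      · exact hw x hx
      · exact hv
    have hF : ∀ u v, G.Adj u v → u ∈ C → s(u, v) ∈ B.edgeSet := by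
      intro u v huv hu
      rw [Subgraph.mem_edgeSet, hadj]
      exact ⟨huv, Or.inl hu⟩
    have hconn : ∀ u ∈ C, ∀ v ∈ C, ∃ w : G.Walk u v, ∀ x ∈ w.support, x ∉ Zs := by
      rintro u ⟨w, hw⟩ v ⟨w', hw'⟩
      refine ⟨w.reverse.append w', ?_⟩
      intro x hx
      rw [Walk.mem_support_append_iff, Walk.support_reverse, List.mem_reverse] at hx
      exact hx.elim (hw x) (hw' x)
    have hnotZ : ∀ e ∈ B.edgeSet, e ∉ {e | e ∈ Z.edges} := by
      intro e he heZ
      induction e with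
      | _ x y =>
        rw [Subgraph.mem_edgeSet, hadj] at he
        rcases he.2 with h | h
        · exact hCZ x h (Z.fst_mem_support_of_mem_edges heZ)
        · exact hCZ y h (Z.snd_mem_support_of_mem_edges heZ)
    have H : ∀ x ∈ Zs, ∀ y ∈ Zs, x ≠ y → ∀ A t, (∀ u ∈ A, u ∈ C ∨ u = x ∨ u = y) →
        HasP G B.edgeSet lam A x y t → t ≠ 0 := by
      rintro x hx y hy hxy A t hA ⟨w, hw, rfl, hwF, rfl⟩
      have hwv : ∀ u ∈ w.support, u ∈ B.verts := by
        intro u hu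
        obtain ⟨e, he, hue⟩ :=
          (Walk.mem_support_iff_exists_mem_edges_of_not_nil (Walk.not_nil_of_ne hxy)).1 hu
        exact Subgraph.mem_verts_of_mem_edge (hwF e he) hue
      refine hnt x y (hwv x (by simp)) hx (hwv y (by simp)) hy hxy w hw
        ⟨hwv, hwF, ?_, fun e he => hnotZ e (hwF e he)⟩
      intro u hu huZ
      exact (hA u hu).resolve_left fun h => hCZ u h huZ
    have H1 : ∀ x ∈ Zs, ∀ y ∈ Zs, x ≠ y → ∀ A t, HasP G B.edgeSet lam A x y t → t ≠ 0 := by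
      intro x hx y hy hxy A t hP
      have hatt : ∀ u ∈ A, u ∉ C → u ∈ Zs ∧ ∃ c ∈ C, G.Adj c u := by
        obtain ⟨w, hw, rfl, hwF, rfl⟩ := hP
        intro u hu huC
        obtain ⟨e, he, hue⟩ :=
          (Walk.mem_support_iff_exists_mem_edges_of_not_nil (Walk.not_nil_of_ne hxy)).1 hu
        obtain ⟨v, rfl⟩ := Sym2.mem_iff_exists.1 hue
        have := hwF _ he
        rw [Subgraph.mem_edgeSet, hadj] at this
        have hv : v ∈ C := this.2.resolve_left huC
        refine ⟨?_, v, hv, this.1.symm⟩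
        by_contra huZ
        exact huC (hC v hv u this.1.symm huZ)
      refine H x hx y hy hxy A t ?_ hP
      intro u hu
      by_contra hcon
      push Not at hcon
      obtain ⟨huZ, c3, hc3, h3⟩ := hatt u hu hcon.1
      obtain ⟨-, c1, hc1, h1⟩ := hatt x hP.left (fun h => hCZ x h hx)
      obtain ⟨-, c2, hc2, h2⟩ := hatt y hP.right (fun h => hCZ y h hy)
      exact three_att hCZ hC hF hconn H hx hy huZ hc1 hc2 hc3 h1 h2 h3 hxy hcon.2.1.symm
        hcon.2.2.symm
    refine core h2 (hNtwo _ Z hZ) H1 (fun s t w => stay hC hF w) _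
      (oddLinked_cycle N hN hNB hl) (hNtwo _ N hN) ?_
    intro u hu
    obtain ⟨e, he, hue⟩ :=
      (Walk.mem_support_iff_exists_mem_edges_of_not_nil hN.not_nil).1 hu
    obtain ⟨v, rfl⟩ := Sym2.mem_iff_exists.1 hue
    have := hNB _ he
    rw [Subgraph.mem_edgeSet, hadj] at this
    by_cases huZ : u ∈ Zs
    · exact Or.inr huZ
    · exact Or.inl (this.2.elim id fun hv => hC v hv u this.1.symm huZ)
end

section
/- Let G be a finite simple graph, Z a cycle in G, λ : E(G) → ℤ/2 an edge labeling, and B a bridge of G with respect to Z that is not a single edge; let v ∈ V(B) \ V(Z) be a reference vertex, and for u ∈ V(B) ∩ V(Z) let L_v(u) = { λ(ω) : ω a proper walk in B from u to v } ⊆ ℤ/2. Suppose there is a vertex x ∈ V(B) ∩ V(Z) with |L_v(x)| = 1. Then there exists a set U ⊆ V(B) \ V(Z) such that the labeling λ′ defined on the edges of B by λ′(e) = λ(e) + (number of endpoints of e lying in U) (mod 2) satisfies: λ′(e) = 0 for every edge e of B having no endpoint on Z, and λ′(e) ∈ L_v(u) for every edge e of B having an endpoint u ∈ V(Z). -/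
open SimpleGraph

variable {V : Type*}

theorem ReachAvoiding.tr {G : SimpleGraph V} {Zv : Set V} {a b c : V}
    (h : ReachAvoiding G Zv a b) (h' : ReachAvoiding G Zv b c) : ReachAvoiding G Zv a c := by
  obtain ⟨p, hp⟩ := h
  obtain ⟨q, hq⟩ := h'
  refine ⟨p.append q, fun x hx => ?_⟩
  rcases (Walk.mem_support_append_iff _ _).1 hx with h | h
  · exact hp x h
  · exact hq x h

theorem ReachAvoiding.sy {G : SimpleGraph V} {Zv : Set V} {a b : V}
    (h : ReachAvoiding G Zv a b) : ReachAvoiding G Zv b a := by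
  obtain ⟨p, hp⟩ := h
  exact ⟨p.reverse, fun x hx => hp x (by simpa using hx)⟩

theorem reach_of_mem_s9 {G : SimpleGraph V} {Zv : Set V} {b c : V} (W : G.Walk b c)
    (hW : ∀ y ∈ W.support, y ∉ Zv) : ∀ y ∈ W.support, ReachAvoiding G Zv b y := by
  classical
  intro y hy
  exact ⟨W.takeUntil y hy, fun x hx => hW x (W.support_takeUntil_subset_support hy hx)⟩

theorem mem_labelSet_aux {G : SimpleGraph V} {Zv : Set V} {Ze : Set (Sym2 V)}
    (hZe : ∀ p q, s(p, q) ∈ Ze → p ∈ Zv ∧ q ∈ Zv) (lam : Sym2 V → ZMod 2)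
    (B : G.Subgraph) (a : V)
    (hadj : ∀ x y, B.Adj x y ↔
        G.Adj x y ∧ (ReachAvoiding G Zv a x ∨ ReachAvoiding G Zv a y))
    {z c v : V} (hc : ReachAvoiding G Zv a c) (h : G.Adj z c)
    (W : G.Walk c v) (hW : ∀ y ∈ W.support, y ∉ Zv) :
    lam s(z, c) + walkLambda lam W ∈ labelSet B Zv Ze lam z v := by
  have hr : ∀ y ∈ W.support, ReachAvoiding G Zv a y := fun y hy =>
    hc.tr (reach_of_mem_s9 W hW y hy)
  have hzc : B.Adj z c := (hadj _ _).2 ⟨h, Or.inr hc⟩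
  have hE : ∀ e ∈ (Walk.cons h W).edges, e ∈ B.edgeSet ∧ e ∉ Ze := by
    intro e he
    rw [Walk.edges_cons, List.mem_cons] at he
    rcases he with rfl | he
    · exact ⟨hzc, fun hh => hW c W.start_mem_support (hZe _ _ hh).2⟩
    · induction e with
      | _ p q =>
        have hp := W.fst_mem_support_of_mem_edges he
        exact ⟨(hadj _ _).2 ⟨W.adj_of_mem_edges he, Or.inl (hr p hp)⟩,
          fun hh => hW p hp (hZe _ _ hh).1⟩
  refine ⟨Walk.cons h W, ⟨?_, fun e he => (hE e he).1, ?_, fun e he => (hE e he).2⟩, ?_⟩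
  · intro u hu
    rw [Walk.support_cons, List.mem_cons] at hu
    rcases hu with rfl | hu
    · exact B.edge_vert hzc
    · by_cases hcu : u = c
      · subst hcu
        exact B.edge_vert hzc.symm
      · -- every vertex of `W` has a neighbour in `B`
        have hne : ¬ W.Nil := by
          intro hn
          rw [Walk.nil_iff_support_eq] at hn
          rw [hn] at hu
          simp at hu
          exact hcu hu
        obtain ⟨e, he, hue⟩ := (Walk.mem_support_iff_exists_mem_edges_of_not_nil hne).1 hu
        obtain ⟨q, rfl⟩ := hue
        exact B.edge_vert ((hE s(u, q) (by simp [he])).1)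
  · intro u hu huZ
    rw [Walk.support_cons, List.mem_cons] at hu
    rcases hu with rfl | hu
    · exact Or.inl rfl
    · exact absurd huZ (hW u hu)
  · simp [walkLambda]

theorem walkLambda_append_aux {G : SimpleGraph V} (lam : Sym2 V → ZMod 2) {a b c : V}
    (p : G.Walk a b) (q : G.Walk b c) :
    walkLambda lam (p.append q) = walkLambda lam p + walkLambda lam q := by
  simp [walkLambda]

/-- Let `B` be a bridge that is not a single edge, with reference vertex
`v ∈ V(B) \ V(Z)`, and suppose some `x ∈ V(B) ∩ V(Z)` has `|L_v(x)| = 1`. Then there is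
a set `U ⊆ V(B) \ V(Z)` such that the labeling `λ′`, obtained from `λ` by adding the
number of endpoints in `U` (mod 2) to each edge of `B`, vanishes on every edge of `B`
with no endpoint on `Z` and satisfies `λ′(e) ∈ L_v(u)` for every edge `e` of `B` with an
endpoint `u ∈ V(Z)`. -/
theorem statement9 [Fintype V] [DecidableEq V] (G : SimpleGraph V)
    (lam : Sym2 V → ZMod 2)
    (z₀ : V) (Z : G.Walk z₀ z₀) (hZ : Z.IsCycle) (B : G.Subgraph)
    (hB : IsBridgeOf G {u | u ∈ Z.support} {e | e ∈ Z.edges} B)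
    (hBedge : ¬ ∃ u w : V, B.edgeSet = {s(u, w)} ∧ B.verts = {u, w})
    (v : V) (hvB : v ∈ B.verts) (hvZ : v ∉ Z.support)
    (x : V) (hxB : x ∈ B.verts) (hxZ : x ∈ Z.support)
    (hL : ∃ t, labelSet B {u | u ∈ Z.support} {e | e ∈ Z.edges} lam x v = {t}) :
    ∃ U : Finset V, (↑U : Set V) ⊆ B.verts \ {u | u ∈ Z.support} ∧
      (∀ a b : V, B.Adj a b → a ∉ Z.support → b ∉ Z.support →
        lam s(a, b) + (if a ∈ U then 1 else 0) + (if b ∈ U then 1 else 0) = 0) ∧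
      (∀ a b : V, B.Adj a b → a ∈ Z.support →
        lam s(a, b) + (if a ∈ U then 1 else 0) + (if b ∈ U then 1 else 0) ∈
          labelSet B {u | u ∈ Z.support} {e | e ∈ Z.edges} lam a v) := by
  classical
  have hZe : ∀ p q, s(p, q) ∈ {e | e ∈ Z.edges} →
      p ∈ {u | u ∈ Z.support} ∧ q ∈ {u | u ∈ Z.support} := fun p q h =>
    ⟨Z.fst_mem_support_of_mem_edges h, Z.snd_mem_support_of_mem_edges h⟩
  have hvZ' : v ∉ {u | u ∈ Z.support} := hvZ
  have hxZ' : x ∈ {u | u ∈ Z.support} := hxZ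
  change ∃ U : Finset V, (↑U : Set V) ⊆ B.verts \ {u | u ∈ Z.support} ∧
      (∀ a b : V, B.Adj a b → a ∉ {u | u ∈ Z.support} → b ∉ {u | u ∈ Z.support} →
        lam s(a, b) + (if a ∈ U then 1 else 0) + (if b ∈ U then 1 else 0) = 0) ∧
      (∀ a b : V, B.Adj a b → a ∈ {u | u ∈ Z.support} →
        lam s(a, b) + (if a ∈ U then 1 else 0) + (if b ∈ U then 1 else 0) ∈
          labelSet B {u | u ∈ Z.support} {e | e ∈ Z.edges} lam a v)
  generalize {u | u ∈ Z.support} = Zv at *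
  generalize {e | e ∈ Z.edges} = Ze at *
  rcases hB with ⟨p, q, -, -, hp, hq, hverts, -⟩ | ⟨a, haZ, hverts, hadj⟩
  · exfalso
    rw [hverts] at hvB
    rcases hvB with rfl | rfl
    · exact hvZ' hp
    · exact hvZ' hq
  have hend : ∀ {p q}, ReachAvoiding G Zv p q → q ∉ Zv := fun ⟨w, hw⟩ =>
    hw _ w.end_mem_support
  have hav : ReachAvoiding G Zv a v := by
    rw [hverts] at hvB
    rcases hvB with h | h
    · exact h
    · exact absurd h.1 hvZ'
  obtain ⟨c₀, hc₀, hc₀x⟩ : ∃ c, ReachAvoiding G Zv a c ∧ G.Adj c x := by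
    rw [hverts] at hxB
    rcases hxB with h | h
    · exact absurd hxZ' (hend h)
    · exact h.2
  obtain ⟨t, ht⟩ := hL
  have huniq : ∀ c (W W' : G.Walk c v), ReachAvoiding G Zv a c →
      (∀ y ∈ W.support, y ∉ Zv) → (∀ y ∈ W'.support, y ∉ Zv) →
      walkLambda lam W = walkLambda lam W' := by
    intro c W W' hc hW hW'
    obtain ⟨P, hP⟩ := hc₀.sy.tr hc
    have key : ∀ Q : G.Walk c v, (∀ y ∈ Q.support, y ∉ Zv) →
        lam s(x, c₀) + (walkLambda lam P + walkLambda lam Q) = t := by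
      intro Q hQ
      have := mem_labelSet_aux hZe lam B a hadj hc₀ hc₀x.symm (P.append Q) (by
        intro y hy
        rcases (Walk.mem_support_append_iff _ _).1 hy with h | h
        · exact hP y h
        · exact hQ y h)
      rw [ht, walkLambda_append_aux] at this
      exact this
    have := (key W hW).trans (key W' hW').symm
    exact add_left_cancel (add_left_cancel this)
  let U : Finset V := Finset.univ.filter fun c => ReachAvoiding G Zv a c ∧
    ∃ W : G.Walk c v, (∀ y ∈ W.support, y ∉ Zv) ∧ walkLambda lam W = 1
  have hUval : ∀ c (W : G.Walk c v), ReachAvoiding G Zv a c → (∀ y ∈ W.support, y ∉ Zv) →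
      (if c ∈ U then (1 : ZMod 2) else 0) = walkLambda lam W := by
    intro c W hc hW
    split_ifs with h
    · obtain ⟨-, W', hW', h1⟩ := (Finset.mem_filter.1 h).2
      rw [← h1]
      exact huniq c W' W hc hW' hW
    · have hne : walkLambda lam W ≠ 1 := fun h1 =>
        h (Finset.mem_filter.2 ⟨Finset.mem_univ _, hc, W, hW, h1⟩)
      revert hne
      generalize walkLambda lam W = r
      revert r
      decide
  refine ⟨U, ?_, ?_, ?_⟩
  · intro c hc
    have hc' := (Finset.mem_filter.1 (Finset.mem_coe.1 hc)).2.1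
    exact ⟨by rw [hverts]; exact Or.inl hc', hend hc'⟩
  · intro p q hpq hp hq
    obtain ⟨hG, hor⟩ := (hadj p q).1 hpq
    have hpq' : ReachAvoiding G Zv p q := ⟨Walk.cons hG Walk.nil, by
      intro y hy
      simp at hy
      rcases hy with rfl | rfl <;> assumption⟩
    have hq' : ReachAvoiding G Zv a q := hor.elim (fun h => h.tr hpq') id
    have hp' : ReachAvoiding G Zv a p := hq'.tr hpq'.sy
    obtain ⟨W, hW⟩ := hq'.sy.tr hav
    rw [hUval q W hq' hW, hUval p (Walk.cons hG W) hp' (by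
      intro y hy
      rw [Walk.support_cons, List.mem_cons] at hy
      rcases hy with rfl | hy
      · exact hp
      · exact hW y hy)]
    have : walkLambda lam (Walk.cons hG W) = lam s(p, q) + walkLambda lam W := by
      simp [walkLambda]
    rw [this]
    generalize walkLambda lam W = r
    generalize lam s(p, q) = s
    revert r s
    decide
  · intro p q hpq hp
    obtain ⟨hG, hor⟩ := (hadj p q).1 hpq
    have hq' : ReachAvoiding G Zv a q := hor.elim (fun h => absurd hp (hend h)) id
    have hpU : p ∉ U := fun h => hend (Finset.mem_filter.1 h).2.1 hp
    obtain ⟨W, hW⟩ := hq'.sy.tr hav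
    rw [hUval q W hq' hW, if_neg hpU, add_zero]
    exact mem_labelSet_aux hZe lam B a hadj hq' hG W hW
end

section
/- Let G be a finite simple graph, Z a cycle in G, λ : E(G) → ℤ/2 an edge labeling, and B a bridge of G with respect to Z. Let u, v ∈ V(B) \ V(Z) and let γ be a proper walk in B from u to v. Then for every x ∈ V(B) ∩ V(Z), the label sets computed from the two reference vertices satisfy L_u(x) = { λ(γ) + t : t ∈ L_v(x) }. In particular, the labelling of V(B) ∩ V(Z) determined by the reference vertex u coincides with the labelling determined by v after adding the constant λ(γ) to every label, so each bridge admits exactly two valid labellings, obtained from one another by swapping the labels 0 and 1. -/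
open SimpleGraph

variable {V : Type*}

/-- For a bridge `B`, two reference vertices `u, v ∈ V(B) \ V(Z)`, and a
proper walk `γ` in `B` from `u` to `v`, the label sets computed from the two reference
vertices satisfy `L_u(x) = { λ(γ) + t : t ∈ L_v(x) }` for every `x ∈ V(B) ∩ V(Z)`; that
is, the labelling determined by `u` is obtained from the one determined by `v` by adding
the constant `λ(γ)` to every label. -/
theorem statement10 [Fintype V] (G : SimpleGraph V) (lam : Sym2 V → ZMod 2)
    (z₀ : V) (Z : G.Walk z₀ z₀) (hZ : Z.IsCycle) (B : G.Subgraph)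
    (hB : IsBridgeOf G {u | u ∈ Z.support} {e | e ∈ Z.edges} B)
    (u v : V) (huB : u ∈ B.verts) (huZ : u ∉ Z.support)
    (hvB : v ∈ B.verts) (hvZ : v ∉ Z.support)
    (γ : G.Walk u v) (hγ : IsProperWalkIn B {u | u ∈ Z.support} {e | e ∈ Z.edges} γ) :
    ∀ x, x ∈ B.verts → x ∈ Z.support →
      labelSet B {u | u ∈ Z.support} {e | e ∈ Z.edges} lam x u =
        (fun t => walkLambda lam γ + t) ''
          labelSet B {u | u ∈ Z.support} {e | e ∈ Z.edges} lam x v := by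
  have two : ∀ a : ZMod 2, a + a = 0 := by decide
  have happ : ∀ {a b c : V} (p : G.Walk a b) (q : G.Walk b c),
      walkLambda lam (p.append q) = walkLambda lam p + walkLambda lam q := by
    intro a b c p q
    simp [walkLambda, Walk.edges_append]
  have hrev : ∀ {a b : V} (p : G.Walk a b), walkLambda lam p.reverse = walkLambda lam p := by
    intro a b p
    simp [walkLambda, Walk.edges_reverse]
  have hoff : ∀ a ∈ γ.support, a ∉ Z.support := by
    intro a ha haZ
    rcases hγ.2.2.1 a ha haZ with rfl | rfl
    · exact huZ haZ
    · exact hvZ haZ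
  obtain ⟨g1, g2, -, g4⟩ := hγ
  intro x hxB hxZ
  ext t
  constructor
  · rintro ⟨ω, ⟨h1, h2, h3, h4⟩, rfl⟩
    refine ⟨walkLambda lam (ω.append γ), ⟨ω.append γ, ⟨?_, ?_, ?_, ?_⟩, rfl⟩, ?_⟩
    · intro a ha
      rcases (Walk.mem_support_append_iff _ _).1 ha with ha | ha
      exacts [h1 a ha, g1 a ha]
    · intro e he
      rw [Walk.edges_append, List.mem_append] at he
      rcases he with he | he
      exacts [h2 e he, g2 e he]
    · intro a ha haZ
      rcases (Walk.mem_support_append_iff _ _).1 ha with ha | ha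
      · rcases h3 a ha haZ with h | h
        · exact Or.inl h
        · exact absurd (h ▸ haZ) huZ
      · exact absurd haZ (hoff a ha)
    · intro e he
      rw [Walk.edges_append, List.mem_append] at he
      rcases he with he | he
      exacts [h4 e he, g4 e he]
    · change walkLambda lam γ + _ = _
      rw [happ, add_left_comm, two, add_zero]
  · rintro ⟨s, ⟨ω, ⟨h1, h2, h3, h4⟩, rfl⟩, rfl⟩
    refine ⟨ω.append γ.reverse, ⟨?_, ?_, ?_, ?_⟩, ?_⟩
    · intro a ha
      rw [Walk.mem_support_append_iff, Walk.support_reverse, List.mem_reverse] at ha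
      rcases ha with ha | ha
      exacts [h1 a ha, g1 a ha]
    · intro e he
      rw [Walk.edges_append, List.mem_append, Walk.edges_reverse, List.mem_reverse] at he
      rcases he with he | he
      exacts [h2 e he, g2 e he]
    · intro a ha haZ
      rw [Walk.mem_support_append_iff, Walk.support_reverse, List.mem_reverse] at ha
      rcases ha with ha | ha
      · rcases h3 a ha haZ with h | h
        · exact Or.inl h
        · exact absurd (h ▸ haZ) hvZ
      · exact absurd haZ (hoff a ha)
    · intro e he
      rw [Walk.edges_append, List.mem_append, Walk.edges_reverse, List.mem_reverse] at he
      rcases he with he | he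
      exacts [h4 e he, g4 e he]
    · rw [happ, hrev, add_comm]
end
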